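/- Lemma 6.1 (integral manifolds near nondegenerate zeros of the averaged phase equation, abstract form): Let G : ℝ → ℝ be C¹ and 2π-periodic, Δ ∈ ℝ, and ϑ⁰ ∈ ℝ with G(ϑ⁰) = Δ and G′(ϑ⁰) ≠ 0. Consider the system dψ₂/dt = μ²(−Δ + G(ψ₂)) + μ⁴ S̃₁₁(ψ₂, βt, μ) + ε²μ² S̃₁₂(ψ₂, φ₂, βt, αt, μ, ε) + ε³μ S̃₁₃(ψ₂, φ₂, βt, αt, μ, ε), dφ₂/dt = α₀ + μ² S̄₂₁(ψ₂) + μ⁴ S̃₂₁(ψ₂, βt, μ) + ε²μ² S̃₂₂(ψ₂, φ₂, βt, αt, μ, ε) + ε³μ S̃₂₃(ψ₂, φ₂, βt, αt, μ, ε), where all functions S̄₂₁, S̃_{jk} are C¹, 2π-periodic in ψ₂, φ₂, βt, αt, and bounded together with their first derivatives uniformly in the parameters. Then there exist μ₀ > 0 and c₀ > 0 such that for all 0 < μ ≤ μ₀ and 0 < ε ≤ c₀ μ^{1/3} there exists an integral manifold ψ₂ = ϑ⁰ + v(φ₂, βt, αt, μ, ε) of this system, where v = μ² v₀(βt, μ)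 + ε² v₁(φ₂, βt, αt, μ, ε) + (ε³/μ) v₂(φ₂, βt, αt, μ, ε) with functions v₀, v₁, v₂ that are C¹, 2π-periodic in their angular arguments and bounded by a constant independent of μ, ε and α ≥ α₀. If G′(ϑ⁰) < 0 this manifold is exponentially stable: there exists δ₀ > 0 such that every solution with |ψ₂(t₀) − ϑ⁰| ≤ δ₀ approaches a solution on the manifold at rate 𝓛₂ e^{−μ²κ₂(t−t₀)} for t ≥ t₀; if G′(ϑ⁰) > 0 it is exponentially unstable: every nearby solution approaches a solution on the manifold at rate 𝓛₃ e^{μ²κ₃(t−t₀)} as t ≤ t₀ decreases, with constants 𝓛₂, 𝓛₃ ≥ 1, κ₂, κ₃ > 0 independent of α, μ, ε. -/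

import Mathlib

/-- Bounded together with the first derivative by `M`. -/
def BddWithDeriv {X : Type*} [NormedAddCommGroup X] [NormedSpace ℝ X]
    (S : X → ℝ) (M : ℝ) : Prop :=
  ∀ p : X, |S p| ≤ M ∧ ‖fderiv ℝ S p‖ ≤ M

/-- `2π`-periodicity in the first two arguments (the angles `ψ₂` and `βt`). -/
def Per2of3 (S : ℝ × ℝ × ℝ → ℝ) : Prop :=
  ∀ a b c : ℝ, S (a + 2 * Real.pi, b, c) = S (a, b, c) ∧
    S (a, b + 2 * Real.pi, c) = S (a, b, c)

/-- `2π`-periodicity in the first four arguments (the angles `ψ₂, φ₂, βt, αt`). -/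
def Per4of6 (S : ℝ × ℝ × ℝ × ℝ × ℝ × ℝ → ℝ) : Prop :=
  ∀ a b c d e f : ℝ,
    S (a + 2 * Real.pi, b, c, d, e, f) = S (a, b, c, d, e, f) ∧
    S (a, b + 2 * Real.pi, c, d, e, f) = S (a, b, c, d, e, f) ∧
    S (a, b, c + 2 * Real.pi, d, e, f) = S (a, b, c, d, e, f) ∧
    S (a, b, c, d + 2 * Real.pi, e, f) = S (a, b, c, d, e, f)

/-- `2π`-periodicity in the first three arguments (the angles `φ₂, βt, αt`). -/
def Per3of5 (S : ℝ × ℝ × ℝ × ℝ × ℝ → ℝ) : Prop :=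
  ∀ a b c d e : ℝ,
    S (a + 2 * Real.pi, b, c, d, e) = S (a, b, c, d, e) ∧
    S (a, b + 2 * Real.pi, c, d, e) = S (a, b, c, d, e) ∧
    S (a, b, c + 2 * Real.pi, d, e) = S (a, b, c, d, e)

/-- The right-hand side of the slow `ψ₂`-equation. -/
def RHSψ (G : ℝ → ℝ) (S11 : ℝ × ℝ × ℝ → ℝ) (S12 S13 : ℝ × ℝ × ℝ × ℝ × ℝ × ℝ → ℝ)
    (Δ α β μ ε : ℝ) (ψ φ t : ℝ) : ℝ :=
  μ^2 * (-Δ + G ψ) + μ^4 * S11 (ψ, β*t, μ)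
    + ε^2*μ^2 * S12 (ψ, φ, β*t, α*t, μ, ε) + ε^3*μ * S13 (ψ, φ, β*t, α*t, μ, ε)

/-- The right-hand side of the `φ₂`-equation. -/
def RHSφ (α₀ : ℝ) (S21bar : ℝ → ℝ) (S21 : ℝ × ℝ × ℝ → ℝ)
    (S22 S23 : ℝ × ℝ × ℝ × ℝ × ℝ × ℝ → ℝ) (α β μ ε : ℝ) (ψ φ t : ℝ) : ℝ :=
  α₀ + μ^2 * S21bar ψ + μ^4 * S21 (ψ, β*t, μ)
    + ε^2*μ^2 * S22 (ψ, φ, β*t, α*t, μ, ε) + ε^3*μ * S23 (ψ, φ, β*t, α*t, μ, ε)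

/-- The graph function `ϑ⁰ + v(φ₂, βt, αt, μ, ε)` of the integral manifold. -/
noncomputable def graphψ (ϑ0 : ℝ) (v₀ : ℝ × ℝ → ℝ) (v₁ v₂ : ℝ × ℝ × ℝ × ℝ × ℝ → ℝ)
    (α β μ ε : ℝ) (φ t : ℝ) : ℝ :=
  ϑ0 + (μ^2 * v₀ (β*t, μ) + ε^2 * v₁ (φ, β*t, α*t, μ, ε)
    + (ε^3/μ) * v₂ (φ, β*t, α*t, μ, ε))


section SlowPhaseHelpers
open Real Set Filter Topology MeasureTheory
open scoped NNReal BoundedContinuousFunction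

/-- Global existence for an autonomous ODE with Lipschitz constant `< 1`. -/
theorem aux_flow_exists {E : Type*} [NormedAddCommGroup E] [NormedSpace ℝ E] [CompleteSpace E]
    (U : E → E) (K : ℝ≥0) (hK : K < 1) (hU : LipschitzWith K U) (x0 : E) :
    ∃ X : ℝ → E, X 0 = x0 ∧ ∀ t, HasDerivAt X (U (X t)) t := by
  have hUc : Continuous U := hU.continuous
  have hcint : ∀ y : ℝ →ᵇ E, Continuous fun s => U (x0 + cosh s • y s) := by
    intro y
    have := y.continuous
    have := Real.continuous_cosh
    fun_prop
  have hcosh : ∀ t : ℝ, |∫ s in (0:ℝ)..t, cosh s| ≤ cosh t := by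
    intro t
    have h : (∫ s in (0:ℝ)..t, cosh s) = sinh t - sinh 0 :=
      intervalIntegral.integral_eq_sub_of_hasDerivAt (fun s _ => Real.hasDerivAt_sinh s)
        (Real.continuous_cosh.intervalIntegrable _ _)
    rw [h, Real.sinh_zero, sub_zero, abs_le]
    have h1 := Real.cosh_add_sinh t
    have h2 := Real.cosh_sub_sinh t
    constructor <;> [linarith [exp_pos t]; linarith [exp_pos (-t)]]
  have hprim : ∀ y : ℝ →ᵇ E, ∀ t : ℝ,
      HasDerivAt (fun t => ∫ s in (0:ℝ)..t, U (x0 + cosh s • y s)) (U (x0 + cosh t • y t)) t :=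
    fun y t => (hcint y).integral_hasStrictDerivAt 0 t |>.hasDerivAt
  have hbd : ∀ y : ℝ →ᵇ E, ∀ t, ‖(cosh t)⁻¹ • ∫ s in (0:ℝ)..t, U (x0 + cosh s • y s)‖
      ≤ ‖U x0‖ + K * ‖y‖ := by
    intro y t
    have h1 : ‖∫ s in (0:ℝ)..t, U (x0 + cosh s • y s)‖
        ≤ |∫ s in (0:ℝ)..t, (‖U x0‖ + K * ‖y‖) * cosh s| := by
      apply intervalIntegral.norm_integral_le_abs_of_norm_le
      · refine Eventually.of_forall fun s => ?_
        have h2 := hU.norm_sub_le (x0 + cosh s • y s) x0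
        have h3 : ‖(x0 + cosh s • y s) - x0‖ ≤ cosh s * ‖y‖ := by
          rw [add_sub_cancel_left, norm_smul, Real.norm_of_nonneg (cosh_pos s).le]
          exact mul_le_mul_of_nonneg_left (y.norm_coe_le_norm s) (cosh_pos s).le
        have h4 : ‖U (x0 + cosh s • y s)‖ ≤ ‖U x0‖ + ‖U (x0 + cosh s • y s) - U x0‖ := by
          have := norm_add_le (U x0) (U (x0 + cosh s • y s) - U x0)
          simpa using this
        have h5 := mul_le_mul_of_nonneg_left h3 K.coe_nonneg
        have h6 : ‖U x0‖ * 1 ≤ ‖U x0‖ * cosh s :=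
          mul_le_mul_of_nonneg_left (one_le_cosh s) (norm_nonneg _)
        nlinarith
      · exact (continuous_const.mul Real.continuous_cosh).intervalIntegrable _ _
    rw [intervalIntegral.integral_const_mul, abs_mul, abs_of_nonneg (by positivity)] at h1
    rw [norm_smul, norm_inv, Real.norm_of_nonneg (cosh_pos t).le, inv_mul_le_iff₀ (cosh_pos t)]
    refine h1.trans ?_
    rw [mul_comm]
    exact mul_le_mul_of_nonneg_right (hcosh t) (by positivity)
  let Φ : (ℝ →ᵇ E) → (ℝ →ᵇ E) := fun y =>
    BoundedContinuousFunction.ofNormedAddCommGroup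
      (fun t => (cosh t)⁻¹ • ∫ s in (0:ℝ)..t, U (x0 + cosh s • y s))
      (by
        have h1 : Continuous (fun t => ∫ s in (0:ℝ)..t, U (x0 + cosh s • y s)) :=
          continuous_iff_continuousAt.2 fun t => (hprim y t).continuousAt
        exact (Real.continuous_cosh.inv₀ fun t => (cosh_pos t).ne').smul h1)
      _ (hbd y)
  have hΦ : ContractingWith K Φ := by
    refine ⟨hK, LipschitzWith.of_dist_le_mul fun y y' => ?_⟩
    rw [BoundedContinuousFunction.dist_le (by positivity)]
    intro t
    rw [dist_eq_norm]
    change ‖(cosh t)⁻¹ • (∫ s in (0:ℝ)..t, U (x0 + cosh s • y s)) -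
      (cosh t)⁻¹ • (∫ s in (0:ℝ)..t, U (x0 + cosh s • y' s))‖ ≤ _
    rw [← smul_sub, ← intervalIntegral.integral_sub ((hcint y).intervalIntegrable _ _)
      ((hcint y').intervalIntegrable _ _)]
    have h1 : ‖∫ s in (0:ℝ)..t, (U (x0 + cosh s • y s) - U (x0 + cosh s • y' s))‖
        ≤ |∫ s in (0:ℝ)..t, (K * dist y y') * cosh s| := by
      apply intervalIntegral.norm_integral_le_abs_of_norm_le
      · refine Eventually.of_forall fun s => ?_
        refine (hU.norm_sub_le _ _).trans ?_
        rw [add_sub_add_left_eq_sub, ← smul_sub, norm_smul, Real.norm_of_nonneg (cosh_pos s).le]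
        have h2 : ‖y s - y' s‖ ≤ dist y y' := by
          rw [← dist_eq_norm]; exact BoundedContinuousFunction.dist_coe_le_dist s
        have h3 := mul_le_mul_of_nonneg_left h2 (mul_nonneg K.coe_nonneg (cosh_pos s).le)
        nlinarith
      · exact (continuous_const.mul Real.continuous_cosh).intervalIntegrable _ _
    rw [intervalIntegral.integral_const_mul, abs_mul, abs_of_nonneg (by positivity)] at h1
    rw [norm_smul, norm_inv, Real.norm_of_nonneg (cosh_pos t).le, inv_mul_le_iff₀ (cosh_pos t)]
    refine h1.trans ?_
    rw [mul_comm]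
    exact mul_le_mul_of_nonneg_right (hcosh t) (by positivity)
  obtain ⟨y, hy⟩ : ∃ y, Φ y = y := ⟨ContractingWith.fixedPoint Φ hΦ, hΦ.fixedPoint_isFixedPt⟩
  have hyt : ∀ t, cosh t • y t = ∫ s in (0:ℝ)..t, U (x0 + cosh s • y s) := by
    intro t
    have h1 : y t = (cosh t)⁻¹ • ∫ s in (0:ℝ)..t, U (x0 + cosh s • y s) := by
      conv_lhs => rw [← hy]
      rfl
    rw [h1, smul_smul, mul_inv_cancel₀ (cosh_pos t).ne', one_smul]
  refine ⟨fun t => x0 + cosh t • y t, ?_, fun t => ?_⟩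
  · have := hyt 0
    simp only [intervalIntegral.integral_same] at this
    simp only [this, add_zero]
  · have h1 := (hprim y t).const_add x0
    have h2 : (fun t => x0 + cosh t • y t) =
        fun t => x0 + ∫ s in (0:ℝ)..t, U (x0 + cosh s • y s) := by
      funext t; rw [hyt]
    rw [h2]
    convert h1 using 1
    exact congrArg U (congrFun h2 t).symm

/-- Two-sided Gronwall with constant `1/4`. -/
theorem aux_gron {E : Type*} [NormedAddCommGroup E] [NormedSpace ℝ E]
    (f f' : ℝ → E) (T ε : ℝ) (hf : ∀ s, HasDerivAt f (f' s) s)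
    (hb : ∀ s, |s| ≤ T → ‖f' s‖ ≤ 1 / 4 * ‖f s‖ + ε) (s : ℝ) (hs : |s| ≤ T) :
    ‖f s‖ ≤ ‖f 0‖ * exp (|s| / 4) + 4 * ε * (exp (|s| / 4) - 1) := by
  have key : ∀ (g g' : ℝ → E), (∀ s, HasDerivAt g (g' s) s) →
      (∀ s, |s| ≤ T → ‖g' s‖ ≤ 1 / 4 * ‖g s‖ + ε) → ∀ s, 0 ≤ s → s ≤ T →
      ‖g s‖ ≤ ‖g 0‖ * exp (s / 4) + 4 * ε * (exp (s / 4) - 1) := by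
    intro g g' hg hb s h0 hT
    have h := norm_le_gronwallBound_of_norm_deriv_right_le (f := g) (f' := g') (δ := ‖g 0‖)
      (K := 1 / 4) (ε := ε) (a := 0) (b := T)
      (fun x _ => (hg x).continuousAt.continuousWithinAt)
      (fun x _ => (hg x).hasDerivWithinAt) le_rfl
      (fun x hx => hb x (by rw [abs_of_nonneg hx.1]; exact hx.2.le)) s ⟨h0, hT⟩
    rw [gronwallBound_of_K_ne_0 (by norm_num)] at h
    simp only [sub_zero] at h
    rw [show (1 / 4 : ℝ) * s = s / 4 by ring, show ε / (1 / 4) = 4 * ε by ring] at h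
    exact h
  rcases le_total 0 s with h | h
  · rw [abs_of_nonneg h] at hs ⊢
    exact key f f' hf hb s h hs
  · rw [abs_of_nonpos h] at hs ⊢
    have := key (fun r => f (-r)) (fun r => - f' (-r))
      (fun r => by
        have := (hf (-r)).scomp r (hasDerivAt_neg r)
        simpa [Function.comp_def] using this)
      (fun r hr => by simpa using hb (-r) (by simpa using hr)) (-s) (by linarith) hs
    simpa using this

/-- One time step of a scalar contracting equation. -/
theorem aux_step (D n : ℝ → ℝ) (t ν : ℝ) (hD : ∀ s, HasDerivAt D (-D s + n s) s)
    (hn : ∀ s ∈ Icc (t - 1) t, |n s| ≤ ν) : |D t| ≤ 0.37 * |D (t - 1)| + ν := by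
  have hν : 0 ≤ ν := (abs_nonneg _).trans (hn t ⟨by linarith, le_rfl⟩)
  have h1 := norm_image_sub_le_of_norm_deriv_le_segment' (f := fun s => exp (s - t) * D s)
    (f' := fun s => exp (s - t) * n s) (a := t - 1) (b := t) (C := ν)
    (fun s _ => by
      have h := (((hasDerivAt_id s).sub_const t).exp.mul (hD s)).hasDerivWithinAt (s := Icc (t-1) t)
      refine h.congr_deriv ?_
      simp only [id]; ring)
    (fun s hs => by
      rw [Real.norm_eq_abs, abs_mul, abs_of_pos (exp_pos _)]
      have h2 : exp (s - t) ≤ 1 := exp_le_one_iff.2 (by linarith [hs.2])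
      have h3 := hn s ⟨hs.1, hs.2.le⟩
      nlinarith [abs_nonneg (n s), exp_pos (s - t)]) t ⟨by linarith, le_rfl⟩
  simp only [sub_self, exp_zero, one_mul, sub_sub_cancel_left, sub_sub_cancel, mul_one,
    Real.norm_eq_abs] at h1
  have h4 : exp (-1) ≤ 0.37 := by
    rw [exp_neg, inv_le_comm₀ (exp_pos _) (by norm_num)]
    have := exp_one_gt_d9
    norm_num at this ⊢
    linarith
  have h5 : |D t| ≤ |D t - exp (-1) * D (t - 1)| + exp (-1) * |D (t - 1)| := by
    have := abs_add_le (D t - exp (-1) * D (t - 1)) (exp (-1) * D (t - 1))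
    rw [abs_mul, abs_of_pos (exp_pos _)] at this
    simpa using this
  nlinarith [abs_nonneg (D (t - 1))]

/-- Bounded solutions of a contracting scalar equation are small. -/
theorem aux_bdd (D n : ℝ → ℝ) (ν R : ℝ) (hν : 0 ≤ ν) (hD : ∀ s, HasDerivAt D (-D s + n s) s)
    (hn : ∀ s, |n s| ≤ 1 / 4 * |D s| + ν) (hR : ∀ s, |D s| ≤ R) : ∀ s, |D s| ≤ 3 * ν := by
  have hbdd : BddAbove (range fun s => |D s|) := ⟨R, by rintro _ ⟨s, rfl⟩; exact hR s⟩
  set S := ⨆ s, |D s| with hS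
  have hle : ∀ s, |D s| ≤ S := fun s => le_ciSup hbdd s
  have h1 : ∀ t, |D t| ≤ 0.37 * S + (1 / 4 * S + ν) := by
    intro t
    have := aux_step D n t (1 / 4 * S + ν) hD (fun s _ => (hn s).trans (by linarith [hle s]))
    linarith [hle (t - 1)]
  have h2 : S ≤ 0.37 * S + (1 / 4 * S + ν) := ciSup_le h1
  intro s
  have := hle s
  norm_num at h2
  linarith

end SlowPhaseHelpers


section SlowPhaseHelpers
open Real Set Filter Topology MeasureTheory
open scoped NNReal BoundedContinuousFunction

theorem aux_fderiv_close {E : Type*} [NormedAddCommGroup E] [NormedSpace ℝ E]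
    (w : E → ℝ) (m δ : ℝ) (hm : 0 ≤ m) (hδ : 0 < δ)
    (h4 : ∀ x y h : E, ‖x - y‖ ≤ δ → ‖h‖ ≤ δ → |w (x + h) - w x - w (y + h) + w y| ≤ m * ‖h‖)
    (x y : E) (hxy : ‖x - y‖ ≤ δ) (hx : DifferentiableAt ℝ w x) (hy : DifferentiableAt ℝ w y) :
    ‖fderiv ℝ w x - fderiv ℝ w y‖ ≤ m := by
  have h1 : HasFDerivAt (fun h => w (x + h) - w (y + h)) (fderiv ℝ w x - fderiv ℝ w y) 0 := by
    have ha : HasFDerivAt (fun h => w (x + h)) (fderiv ℝ w x) 0 := by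
      have : HasFDerivAt w (fderiv ℝ w x) (x + 0) := by simpa using hx.hasFDerivAt
      have h := this.comp (0 : E) ((hasFDerivAt_id (0 : E)).const_add x)
      simpa [Function.comp_def] using h
    have hb : HasFDerivAt (fun h => w (y + h)) (fderiv ℝ w y) 0 := by
      have : HasFDerivAt w (fderiv ℝ w y) (y + 0) := by simpa using hy.hasFDerivAt
      have h := this.comp (0 : E) ((hasFDerivAt_id (0 : E)).const_add y)
      simpa [Function.comp_def] using h
    exact ha.sub hb
  refine h1.le_of_lip' hm ?_
  filter_upwards [Metric.closedBall_mem_nhds (0 : E) hδ] with h hh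
  have hh' : ‖h‖ ≤ δ := by simpa using hh
  have := h4 x y h hxy hh'
  rw [Real.norm_eq_abs]
  simp only [add_zero, sub_zero]
  convert this using 2
  ring

theorem aux_c1 {E : Type*} [NormedAddCommGroup E] [NormedSpace ℝ E] [FiniteDimensional ℝ E]
    (w : E → ℝ) (L : ℝ≥0) (hw : LipschitzWith L w)
    (h4 : ∀ m > (0:ℝ), ∃ δ > (0:ℝ), ∀ x y h : E, ‖x - y‖ ≤ δ → ‖h‖ ≤ δ →
      |w (x + h) - w x - w (y + h) + w y| ≤ m * ‖h‖) :
    ContDiff ℝ 1 w := by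
  have hdense : Dense {x | DifferentiableAt ℝ w x} := by
    borelize E
    let μ : Measure E := Measure.addHaar
    exact Measure.dense_of_ae (hw.ae_differentiableAt (μ := μ))
  have hdiff : Differentiable ℝ w := by
    intro x
    -- a sequence of points of differentiability
    have hseq : ∀ n : ℕ, ∃ y, DifferentiableAt ℝ w y ∧ dist x y < 1 / (n + 1 : ℝ) := fun n =>
      hdense.exists_dist_lt x (by positivity)
    choose y hy hyx using hseq
    have hbd : ∀ n, fderiv ℝ w (y n) ∈ Metric.closedBall (0 : E →L[ℝ] ℝ) L := by
      intro n
      simpa using norm_fderiv_le_of_lipschitz ℝ hw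
    obtain ⟨p, -, k, hk, hlim⟩ := (isCompact_closedBall (0 : E →L[ℝ] ℝ) (L:ℝ)).tendsto_subseq hbd
    have hyl : Tendsto (fun n => dist x (y (k n))) atTop (𝓝 0) := by
      have h0 : Tendsto (fun n => dist x (y n)) atTop (𝓝 0) :=
        squeeze_zero (fun _ => dist_nonneg) (fun n => (hyx n).le)
          tendsto_one_div_add_atTop_nhds_zero_nat
      exact h0.comp hk.tendsto_atTop
    refine HasFDerivAt.differentiableAt (f' := p) ?_
    rw [hasFDerivAt_iff_isLittleO_nhds_zero, Asymptotics.isLittleO_iff]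
    intro c hc
    obtain ⟨δ, hδ, h4δ⟩ := h4 (c / 3) (by positivity)
    have e1 : ∀ᶠ n in atTop, dist x (y (k n)) < δ := hyl.eventually_lt_const hδ
    have e2 : ∀ᶠ n in atTop, dist (fderiv ℝ w (y (k n))) p < c / 3 :=
      (tendsto_iff_dist_tendsto_zero.1 hlim).eventually_lt_const (by positivity)
    obtain ⟨n, hn1, hn2⟩ := (e1.and e2).exists
    have e3 := (hasFDerivAt_iff_isLittleO_nhds_zero.1 (hy (k n)).hasFDerivAt)
    rw [Asymptotics.isLittleO_iff] at e3
    filter_upwards [e3 (c := c / 3) (by positivity), Metric.closedBall_mem_nhds (0 : E) hδ]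
      with h hh1 hh2
    have hh2' : ‖h‖ ≤ δ := by simpa using hh2
    have a1 := h4δ x (y (k n)) h (by rw [← dist_eq_norm]; exact hn1.le) hh2'
    have a2 : |(fderiv ℝ w (y (k n)) - p) h| ≤ c / 3 * ‖h‖ := by
      rw [← Real.norm_eq_abs]
      refine (ContinuousLinearMap.le_opNorm _ _).trans ?_
      rw [← dist_eq_norm]
      exact mul_le_mul_of_nonneg_right hn2.le (norm_nonneg _)
    rw [Real.norm_eq_abs] at hh1 ⊢
    have a3 : w (x + h) - w x - p h = (w (x + h) - w x - w (y (k n) + h) + w (y (k n)))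
        + (w (y (k n) + h) - w (y (k n)) - fderiv ℝ w (y (k n)) h)
        + (fderiv ℝ w (y (k n)) - p) h := by
      simp only [sub_apply]; ring
    rw [a3]
    refine (abs_add_three _ _ _).trans ?_
    linarith
  rw [contDiff_one_iff_fderiv]
  refine ⟨hdiff, ?_⟩
  rw [Metric.continuous_iff]
  intro x e he
  obtain ⟨δ, hδ, h4δ⟩ := h4 (e / 2) (by positivity)
  refine ⟨δ, hδ, fun y hy => ?_⟩
  rw [dist_eq_norm] at hy ⊢
  have := aux_fderiv_close w (e / 2) δ (by positivity) hδ h4δ y x hy.le (hdiff y) (hdiff x)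
  linarith

/-- Standing assumptions on the scaled abstract system with data `N` and `V`. -/
structure AuxSys {E : Type*} [NormedAddCommGroup E] [NormedSpace ℝ E]
    (N : ℝ × E → ℝ) (V : ℝ × E → E) (C ρ : ℝ) : Prop where
  hC : 1 ≤ C
  hρ : 0 < ρ
  cN : ContDiff ℝ 1 N
  cV : ContDiff ℝ 1 V
  uN : UniformContinuous (fderiv ℝ N)
  uV : UniformContinuous (fderiv ℝ V)
  bN : ∀ (z : ℝ) (x : E) (a : ℝ) (v : E), |z| ≤ ρ →
    |fderiv ℝ N (z, x) (a, v)| ≤ 1 / (64 * C) * (|a| + ‖v‖)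
  bV : ∀ (z : ℝ) (x : E) (a : ℝ) (v : E), |z| ≤ ρ →
    ‖fderiv ℝ V (z, x) (a, v)‖ ≤ C * |a| + 1 / (64 * C) * ‖v‖
  N0 : ∀ x, |N (0, x)| ≤ ρ / 2

/-- Lipschitz estimate from directional derivative bounds on a strip. -/
theorem aux_lip {E F : Type*} [NormedAddCommGroup E] [NormedSpace ℝ E]
    [NormedAddCommGroup F] [NormedSpace ℝ F] (f : ℝ × E → F) (ρ a b : ℝ)
    (hf : ContDiff ℝ 1 f)
    (hb : ∀ (z : ℝ) (x : E) (c : ℝ) (v : E), |z| ≤ ρ →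
      ‖fderiv ℝ f (z, x) (c, v)‖ ≤ a * |c| + b * ‖v‖)
    (z z' : ℝ) (x x' : E) (hz : |z| ≤ ρ) (hz' : |z'| ≤ ρ) :
    ‖f (z, x) - f (z', x')‖ ≤ a * |z - z'| + b * ‖x - x'‖ := by
  have hd : Differentiable ℝ f := hf.differentiable one_ne_zero
  have h1 := norm_image_sub_le_of_norm_deriv_le_segment_01'
    (f := fun t : ℝ => f ((z', x') + t • ((z, x) - (z', x'))))
    (f' := fun t : ℝ => fderiv ℝ f ((z', x') + t • ((z, x) - (z', x'))) ((z, x) - (z', x')))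
    (C := a * |z - z'| + b * ‖x - x'‖)
    (fun t _ => by
      have h2 : HasDerivAt (fun t : ℝ => (z', x') + t • ((z, x) - (z', x')))
          ((z, x) - (z', x')) t := by
        simpa using ((hasDerivAt_id t).smul_const ((z, x) - (z', x'))).const_add (z', x')
      exact ((hd _).hasFDerivAt.comp_hasDerivAt t h2).hasDerivWithinAt)
    (fun t ht => by
      have h3 : |z' + t * (z - z')| ≤ ρ := by
        rw [abs_le] at *
        constructor <;> nlinarith [ht.1, ht.2]
      have := hb (z' + t * (z - z')) (x' + t • (x - x')) (z - z') (x - x') h3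
      simpa using this)
  simpa using h1

/-- Four point estimate from directional derivative bounds on a strip. -/
theorem aux_four {E F : Type*} [NormedAddCommGroup E] [NormedSpace ℝ E]
    [NormedAddCommGroup F] [NormedSpace ℝ F] (f : ℝ × E → F) (ρ a b : ℝ)
    (hf : ContDiff ℝ 1 f) (hu : UniformContinuous (fderiv ℝ f))
    (hb : ∀ (z : ℝ) (x : E) (c : ℝ) (v : E), |z| ≤ ρ →
      ‖fderiv ℝ f (z, x) (c, v)‖ ≤ a * |c| + b * ‖v‖) (e : ℝ) (he : 0 < e) :
    ∃ δ > (0:ℝ), ∀ u₁ u₂ u₃ u₄ : ℝ × E, |u₃.1| ≤ ρ → |u₄.1| ≤ ρ →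
      ‖u₁ - u₃‖ < δ → ‖u₂ - u₄‖ < δ →
      ‖f u₁ - f u₂ - f u₃ + f u₄‖ ≤
        a * |u₁.1 - u₂.1 - u₃.1 + u₄.1| + b * ‖u₁.2 - u₂.2 - u₃.2 + u₄.2‖ + e * ‖u₁ - u₂‖ := by
  have hd : Differentiable ℝ f := hf.differentiable one_ne_zero
  obtain ⟨δ, hδ, hud⟩ := Metric.uniformContinuous_iff.1 hu e he
  refine ⟨δ, hδ, fun u₁ u₂ u₃ u₄ h3 h4 h13 h24 => ?_⟩
  have hder : ∀ (p q : ℝ × E) (t : ℝ), HasDerivAt (fun t : ℝ => f (q + t • (p - q)))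
      (fderiv ℝ f (q + t • (p - q)) (p - q)) t := by
    intro p q t
    have h2 : HasDerivAt (fun t : ℝ => q + t • (p - q)) (p - q) t := by
      simpa using ((hasDerivAt_id t).smul_const (p - q)).const_add q
    exact (hd _).hasFDerivAt.comp_hasDerivAt t h2
  have h1 := norm_image_sub_le_of_norm_deriv_le_segment_01'
    (f := fun t : ℝ => f (u₂ + t • (u₁ - u₂)) - f (u₄ + t • (u₃ - u₄)))
    (f' := fun t : ℝ => fderiv ℝ f (u₂ + t • (u₁ - u₂)) (u₁ - u₂)
      - fderiv ℝ f (u₄ + t • (u₃ - u₄)) (u₃ - u₄))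
    (C := a * |u₁.1 - u₂.1 - u₃.1 + u₄.1| + b * ‖u₁.2 - u₂.2 - u₃.2 + u₄.2‖ + e * ‖u₁ - u₂‖)
    (fun t _ => ((hder u₁ u₂ t).sub (hder u₃ u₄ t)).hasDerivWithinAt)
    (fun t ht => by
      set P := u₂ + t • (u₁ - u₂) with hP
      set Q := u₄ + t • (u₃ - u₄) with hQ
      have hPQ : ‖P - Q‖ < δ := by
        have : P - Q = (1 - t) • (u₂ - u₄) + t • (u₁ - u₃) := by
          rw [hP, hQ]; module
        rw [this]
        refine (norm_add_le _ _).trans_lt ?_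
        rw [norm_smul, norm_smul, Real.norm_of_nonneg (by linarith [ht.2]),
          Real.norm_of_nonneg ht.1]
        have t0 := ht.1
        have t1 := ht.2
        nlinarith
      have hq : |Q.1| ≤ ρ := by
        have : Q.1 = u₄.1 + t * (u₃.1 - u₄.1) := by simp [hQ]
        rw [this]
        rw [abs_le] at *
        constructor <;> nlinarith [ht.1, ht.2]
      have e1 : ‖(fderiv ℝ f P - fderiv ℝ f Q) (u₁ - u₂)‖ ≤ e * ‖u₁ - u₂‖ := by
        refine (ContinuousLinearMap.le_opNorm _ _).trans ?_
        refine mul_le_mul_of_nonneg_right ?_ (norm_nonneg _)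
        have := hud (a := P) (b := Q) (by rw [dist_eq_norm]; exact hPQ)
        rw [dist_eq_norm] at this
        exact this.le
      have e2 : ‖fderiv ℝ f Q (u₁ - u₂ - u₃ + u₄)‖ ≤
          a * |u₁.1 - u₂.1 - u₃.1 + u₄.1| + b * ‖u₁.2 - u₂.2 - u₃.2 + u₄.2‖ := by
        have := hb Q.1 Q.2 (u₁ - u₂ - u₃ + u₄).1 (u₁ - u₂ - u₃ + u₄).2 hq
        exact this
      have e3 : fderiv ℝ f P (u₁ - u₂) - fderiv ℝ f Q (u₃ - u₄)
          = (fderiv ℝ f P - fderiv ℝ f Q) (u₁ - u₂) + fderiv ℝ f Q (u₁ - u₂ - u₃ + u₄) := by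
        simp only [sub_apply, map_sub, map_add]; abel
      rw [e3]
      refine (norm_add_le _ _).trans ?_
      linarith)
  have h2 : f u₁ - f u₂ - f u₃ + f u₄ = (f u₁ - f u₃) - (f u₂ - f u₄) := by abel
  rw [h2]
  simpa using h1

end SlowPhaseHelpers


section SlowPhaseHelpers
open Real Set Filter Topology MeasureTheory
open scoped NNReal BoundedContinuousFunction

theorem aux_int (f : ℝ → ℝ) (hf : Continuous f) (c a : ℝ) (ha : a < 1)
    (h : ∀ s ≤ 0, |f s| ≤ c * exp (-(a * s))) :
    IntegrableOn (fun s => exp s * f s) (Iic 0) ∧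
      |∫ s in Iic (0:ℝ), exp s * f s| ≤ c / (1 - a) := by
  have hg : IntegrableOn (fun s => c * exp ((1 - a) * s)) (Iic 0) :=
    (integrableOn_exp_mul_Iic (by linarith) 0).const_mul c
  have hle : ∀ s ≤ (0:ℝ), ‖exp s * f s‖ ≤ c * exp ((1 - a) * s) := by
    intro s hs
    rw [norm_mul, Real.norm_of_nonneg (exp_pos s).le, Real.norm_eq_abs]
    calc exp s * |f s| ≤ exp s * (c * exp (-(a * s))) :=
          mul_le_mul_of_nonneg_left (h s hs) (exp_pos s).le
      _ = c * (exp s * exp (-(a * s))) := by ring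
      _ = c * exp ((1 - a) * s) := by rw [← exp_add]; ring_nf
  have hae : ∀ᵐ s ∂(volume.restrict (Iic (0:ℝ))), ‖exp s * f s‖ ≤ c * exp ((1 - a) * s) := by
    rw [ae_restrict_iff' measurableSet_Iic]
    exact Eventually.of_forall hle
  refine ⟨Integrable.mono' hg (by fun_prop) hae, ?_⟩
  have h1 := norm_integral_le_of_norm_le hg hae
  rw [integral_const_mul, integral_exp_mul_Iic (by linarith)] at h1
  rw [Real.norm_eq_abs] at h1
  refine h1.trans (le_of_eq ?_)
  simp [div_eq_mul_inv]

theorem AuxSys.small {E : Type*} [NormedAddCommGroup E] [NormedSpace ℝ E]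
    {N : ℝ × E → ℝ} {V : ℝ × E → E} {C ρ : ℝ} (h : AuxSys N V C ρ) :
    0 < C ∧ 0 < 1 / (64 * C) ∧ 1 / (64 * C) ≤ 1 / 64 ∧ C * (1 / (8 * C)) = 1 / 8 ∧
      1 / (8 * C) = 8 * (1 / (64 * C)) ∧ C * (1 / (64 * C)) = 1 / 64 := by
  have hC : 0 < C := by linarith [h.hC]
  refine ⟨hC, by positivity, ?_, by field_simp, by field_simp; norm_num, by field_simp⟩
  apply one_div_le_one_div_of_le (by norm_num); linarith [h.hC]

theorem AuxSys.lipN {E : Type*} [NormedAddCommGroup E] [NormedSpace ℝ E]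
    {N : ℝ × E → ℝ} {V : ℝ × E → E} {C ρ : ℝ} (h : AuxSys N V C ρ)
    (z z' : ℝ) (x x' : E) (hz : |z| ≤ ρ) (hz' : |z'| ≤ ρ) :
    |N (z, x) - N (z', x')| ≤ 1 / (64 * C) * |z - z'| + 1 / (64 * C) * ‖x - x'‖ := by
  have := aux_lip N ρ (1 / (64 * C)) (1 / (64 * C)) h.cN
    (fun z x c v hz => (h.bN z x c v hz).trans (le_of_eq (by ring))) z z' x x' hz hz'
  simpa using this

theorem AuxSys.lipV {E : Type*} [NormedAddCommGroup E] [NormedSpace ℝ E]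
    {N : ℝ × E → ℝ} {V : ℝ × E → E} {C ρ : ℝ} (h : AuxSys N V C ρ)
    (z z' : ℝ) (x x' : E) (hz : |z| ≤ ρ) (hz' : |z'| ≤ ρ) :
    ‖V (z, x) - V (z', x')‖ ≤ C * |z - z'| + 1 / (64 * C) * ‖x - x'‖ :=
  aux_lip V ρ C (1 / (64 * C)) h.cV h.bV z z' x x' hz hz'

theorem AuxSys.bddN {E : Type*} [NormedAddCommGroup E] [NormedSpace ℝ E]
    {N : ℝ × E → ℝ} {V : ℝ × E → E} {C ρ : ℝ} (h : AuxSys N V C ρ)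
    (z : ℝ) (x : E) (hz : |z| ≤ ρ) : |N (z, x)| ≤ 3 / 4 * ρ := by
  have h1 := h.lipN z 0 x x hz (by simpa using h.hρ.le)
  simp only [sub_zero, sub_self, norm_zero, mul_zero, add_zero] at h1
  have h2 := h.N0 x
  have h3 := h.small
  have h4 : |N (z, x)| ≤ |N (z, x) - N (0, x)| + |N (0, x)| := by
    have := abs_add_le (N (z, x) - N (0, x)) (N (0, x)); simpa using this
  nlinarith [abs_nonneg z, h.hρ]

/-- The class of admissible graph functions. -/
structure AuxAdm {E : Type*} [NormedAddCommGroup E] [NormedSpace ℝ E]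
    (C ρ : ℝ) (w : E → ℝ) : Prop where
  bd : ∀ x, |w x| ≤ ρ
  lip : ∀ x y, |w x - w y| ≤ 1 / (8 * C) * ‖x - y‖

theorem AuxSys.lipU {E : Type*} [NormedAddCommGroup E] [NormedSpace ℝ E]
    {N : ℝ × E → ℝ} {V : ℝ × E → E} {C ρ : ℝ} (h : AuxSys N V C ρ) {w : E → ℝ}
    (hw : AuxAdm C ρ w) (x y : E) : ‖V (w x, x) - V (w y, y)‖ ≤ 1 / 4 * ‖x - y‖ := by
  have h1 := h.lipV (w x) (w y) x y (hw.bd x) (hw.bd y)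
  have h2 := hw.lip x y
  obtain ⟨c0, c1, c2, c3, c4, c5⟩ := h.small
  have h3 := mul_le_mul_of_nonneg_left h2 c0.le
  rw [← mul_assoc, c3] at h3
  nlinarith [norm_nonneg (x - y)]

theorem AuxSys.flow {E : Type*} [NormedAddCommGroup E] [NormedSpace ℝ E] [CompleteSpace E]
    {N : ℝ × E → ℝ} {V : ℝ × E → E} {C ρ : ℝ} (h : AuxSys N V C ρ) {w : E → ℝ}
    (hw : AuxAdm C ρ w) (x : E) :
    ∃ X : ℝ → E, X 0 = x ∧ ∀ t, HasDerivAt X (V (w (X t), X t)) t := by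
  refine aux_flow_exists (fun x => V (w x, x)) (Real.toNNReal (1 / 4)) ?_ ?_ x
  · rw [← NNReal.coe_lt_coe, Real.coe_toNNReal _ (by norm_num)]; norm_num
  · refine LipschitzWith.of_dist_le_mul fun x y => ?_
    rw [dist_eq_norm, dist_eq_norm, Real.coe_toNNReal _ (by norm_num)]
    exact h.lipU hw x y

theorem AuxSys.traj_dist {E : Type*} [NormedAddCommGroup E] [NormedSpace ℝ E]
    {N : ℝ × E → ℝ} {V : ℝ × E → E} {C ρ : ℝ} (h : AuxSys N V C ρ) {w : E → ℝ}
    (hw : AuxAdm C ρ w) (X Y : ℝ → E) (hX : ∀ t, HasDerivAt X (V (w (X t), X t)) t)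
    (hY : ∀ t, HasDerivAt Y (V (w (Y t), Y t)) t) (s : ℝ) :
    ‖X s - Y s‖ ≤ ‖X 0 - Y 0‖ * exp (|s| / 4) := by
  have := aux_gron (fun s => X s - Y s) _ |s| 0 (fun s => (hX s).sub (hY s))
    (fun s _ => by simpa using h.lipU hw (X s) (Y s)) s le_rfl
  simpa using this

theorem AuxSys.exists_lip {E : Type*} [NormedAddCommGroup E] [NormedSpace ℝ E] [CompleteSpace E]
    {N : ℝ × E → ℝ} {V : ℝ × E → E} {C ρ : ℝ} (h : AuxSys N V C ρ) :
    ∃ w : E → ℝ, AuxAdm C ρ w ∧ ∀ X : ℝ → E, (∀ t, HasDerivAt X (V (w (X t), X t)) t) →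
      ∀ t, HasDerivAt (fun s => w (X s)) (-w (X t) + N (w (X t), X t)) t := by
  obtain ⟨c0, c1, c2, c3, c4, c5⟩ := h.small
  have hNc : Continuous N := h.cN.continuous
  let S : Set (E →ᵇ ℝ) := {w | AuxAdm C ρ w}
  have hSclosed : IsClosed S := by
    have hS : S = (⋂ x, {w : E →ᵇ ℝ | |w x| ≤ ρ}) ∩
        ⋂ x, ⋂ y, {w : E →ᵇ ℝ | |w x - w y| ≤ 1 / (8 * C) * ‖x - y‖} := by
      ext w
      simp only [S, mem_inter_iff, mem_iInter, Set.mem_ofPred_eq]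
      exact ⟨fun hw => ⟨hw.bd, hw.lip⟩, fun hw => ⟨hw.1, hw.2⟩⟩
    rw [hS]
    have hev : ∀ x : E, Continuous fun w : E →ᵇ ℝ => w x := fun x =>
      BoundedContinuousFunction.lipschitz_eval_const x |>.continuous
    refine IsClosed.inter (isClosed_iInter fun x => ?_)
      (isClosed_iInter fun x => isClosed_iInter fun y => ?_)
    · exact isClosed_le (hev x).abs continuous_const
    · exact isClosed_le ((hev x).sub (hev y)).abs continuous_const
  haveI : CompleteSpace S := hSclosed.completeSpace_coe
  haveI : Nonempty S := ⟨⟨0, ⟨fun x => by simpa using h.hρ.le, fun x y => by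
    simp only [BoundedContinuousFunction.coe_zero, Pi.zero_apply, sub_self, abs_zero]
    positivity⟩⟩⟩
  have hflow : ∀ w : S, ∀ x : E, ∃ X : ℝ → E, X 0 = x ∧
      ∀ t, HasDerivAt X (V (w.1 (X t), X t)) t := fun w x => h.flow w.2 x
  choose X hX0 hX using hflow
  have hXc : ∀ w x, Continuous (X w x) := fun w x =>
    continuous_iff_continuousAt.2 fun t => (hX w x t).continuousAt
  have hfc : ∀ (w : S) x, Continuous fun s => N (w.1 (X w x s), X w x s) := fun w x =>
    hNc.comp ((w.1.continuous.comp (hXc w x)).prodMk (hXc w x))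
  let Tf : S → E → ℝ := fun w x => ∫ s in Iic (0:ℝ), exp s * N (w.1 (X w x s), X w x s)
  have hI : ∀ (w : S) x, IntegrableOn (fun s => exp s * N (w.1 (X w x s), X w x s)) (Iic 0) ∧
      |Tf w x| ≤ ρ := by
    intro w x
    have := aux_int _ (hfc w x) (3 / 4 * ρ) 0 one_pos (fun s _ => by
      simpa using h.bddN _ (X w x s) (w.2.bd _))
    refine ⟨this.1, this.2.trans ?_⟩
    linarith [h.hρ]
  have hlip : ∀ (w : S) x y, |Tf w x - Tf w y| ≤ 1 / (8 * C) * ‖x - y‖ := by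
    intro w x y
    have h1 := aux_int (fun s => N (w.1 (X w x s), X w x s) - N (w.1 (X w y s), X w y s))
      ((hfc w x).sub (hfc w y)) (2 * (1 / (64 * C)) * ‖x - y‖) (1 / 4) (by norm_num) (fun s hs => by
        have e1 := h.lipN _ _ (X w x s) (X w y s) (w.2.bd (X w x s)) (w.2.bd (X w y s))
        have e2 := h.traj_dist w.2 _ _ (hX w x) (hX w y) s
        rw [hX0, hX0, abs_of_nonpos hs] at e2
        have e3 := w.2.lip (X w x s) (X w y s)
        have e4 : 1 / (8 * C) ≤ 1 := by rw [c4]; linarith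
        have e5 : |w.1 (X w x s) - w.1 (X w y s)| ≤ ‖X w x s - X w y s‖ := by
          refine e3.trans ?_
          nlinarith [norm_nonneg (X w x s - X w y s)]
        rw [show -(1 / 4 * s) = -s / 4 by ring]
        nlinarith)
    have h2 : Tf w x - Tf w y =
        ∫ s in Iic (0:ℝ), exp s * (N (w.1 (X w x s), X w x s) - N (w.1 (X w y s), X w y s)) := by
      simp only [Tf]
      rw [← integral_sub (hI w x).1 (hI w y).1]
      simp only [mul_sub]
    rw [h2]
    refine h1.2.trans ?_
    rw [c4, div_le_iff₀ (by norm_num)]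
    nlinarith [mul_nonneg c1.le (norm_nonneg (x - y))]
  let T : S → S := fun w =>
    ⟨BoundedContinuousFunction.ofNormedAddCommGroup (Tf w)
      (LipschitzWith.of_dist_le_mul (K := Real.toNNReal (1 / (8 * C))) (fun x y => by
        rw [dist_eq_norm, dist_eq_norm, Real.coe_toNNReal _ (by positivity)]; exact hlip w x y)).continuous ρ
      (fun x => (hI w x).2), ⟨fun x => (hI w x).2, fun x y => hlip w x y⟩⟩
  have hT : ContractingWith (Real.toNNReal (1 / 2)) T := by
    refine ⟨by rw [← NNReal.coe_lt_coe, Real.coe_toNNReal _ (by norm_num)]; norm_num,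
      LipschitzWith.of_dist_le_mul fun w w' => ?_⟩
    rw [Real.coe_toNNReal _ (by norm_num), Subtype.dist_eq,
      BoundedContinuousFunction.dist_le (by positivity)]
    intro x
    rw [Real.dist_eq]
    change |Tf w x - Tf w' x| ≤ 1 / 2 * dist w w'
    have hww : ∀ x, |w.1 x - w'.1 x| ≤ dist w w' := fun x => by
      rw [← Real.dist_eq, Subtype.dist_eq]
      exact BoundedContinuousFunction.dist_coe_le_dist x
    have hd0 : 0 ≤ dist w w' := dist_nonneg
    set d := dist w w' with hd
    have h2 : Tf w x - Tf w' x =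
        ∫ s in Iic (0:ℝ), exp s * (N (w.1 (X w x s), X w x s) - N (w'.1 (X w' x s), X w' x s)) := by
      simp only [Tf]
      rw [← integral_sub (hI w x).1 (hI w' x).1]
      simp only [mul_sub]
    have h0 : ∀ s, |w.1 (X w x s) - w'.1 (X w' x s)| ≤
        1 / (8 * C) * ‖X w x s - X w' x s‖ + d := by
      intro s
      have a1 := w.2.lip (X w x s) (X w' x s)
      have a2 := hww (X w' x s)
      have a3 := abs_sub_le (w.1 (X w x s)) (w.1 (X w' x s)) (w'.1 (X w' x s))
      linarith
    have h1 := aux_int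
      (fun s => N (w.1 (X w x s), X w x s) - N (w'.1 (X w' x s), X w' x s))
      ((hfc w x).sub (hfc w' x)) ((9 / 64) * d) (1 / 4) (by norm_num) (fun s hs => by
        have e1 := h.lipN _ _ (X w x s) (X w' x s) (w.2.bd (X w x s)) (w'.2.bd (X w' x s))
        have e2 := aux_gron (fun s => X w x s - X w' x s) _ |s| (C * d)
          (fun s => (hX w x s).sub (hX w' x s)) (fun s _ => by
            have b1 := h.lipV _ _ (X w x s) (X w' x s) (w.2.bd (X w x s)) (w'.2.bd (X w' x s))
            have b2 := mul_le_mul_of_nonneg_left (h0 s) c0.le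
            rw [mul_add, ← mul_assoc, c3] at b2
            nlinarith [norm_nonneg (X w x s - X w' x s)]) s le_rfl
        simp only [hX0, sub_self, norm_zero, zero_mul, zero_add] at e2
        rw [abs_of_nonpos hs] at e2
        have e3 := h0 s
        have e4 : 1 / (8 * C) ≤ 1 / 8 := by rw [c4]; linarith
        rw [show -(1 / 4 * s) = -s / 4 by ring]
        set ex := exp (-s / 4) with hex
        have hex1 : 1 ≤ ex := one_le_exp (by linarith)
        set dx := ‖X w x s - X w' x s‖ with hdx
        have hdx0 : 0 ≤ dx := norm_nonneg _
        have e5 : |w.1 (X w x s) - w'.1 (X w' x s)| + dx ≤ 9 / 8 * dx + d := by nlinarith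
        have e6 : 1 / (64 * C) * dx ≤ 1 / (64 * C) * (4 * (C * d) * (ex - 1)) :=
          mul_le_mul_of_nonneg_left e2 c1.le
        have e7 : 1 / (64 * C) * (4 * (C * d) * (ex - 1)) = 1 / 16 * (d * (ex - 1)) := by
          have : 1 / (64 * C) * (4 * (C * d) * (ex - 1)) =
            (C * (1 / (64 * C))) * (4 * d * (ex - 1)) := by ring
          rw [this, c5]; ring
        have e8 : 1 / (64 * C) * d ≤ 1 / 64 * d := mul_le_mul_of_nonneg_right c2 hd0
        have e9 := mul_le_mul_of_nonneg_left e5 c1.le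
        have e10 : d * 1 ≤ d * ex := mul_le_mul_of_nonneg_left hex1 hd0
        nlinarith)
    rw [h2]
    refine h1.2.trans ?_
    rw [div_le_iff₀ (by norm_num)]
    linarith
  obtain ⟨w, hw⟩ : ∃ w, T w = w := ⟨ContractingWith.fixedPoint T hT, hT.fixedPoint_isFixedPt⟩
  have hwT : ∀ x, w.1 x = Tf w x := by
    intro x
    conv_lhs => rw [← hw]
    rfl
  refine ⟨w.1, w.2, fun Y hY t => ?_⟩
  have hYc : Continuous Y := continuous_iff_continuousAt.2 fun t => (hY t).continuousAt
  set n : ℝ → ℝ := fun s => N (w.1 (Y s), Y s) with hn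
  have hnc : Continuous n := hNc.comp ((w.1.continuous.comp hYc).prodMk hYc)
  have hsh : ∀ t s, X w (Y t) s = Y (s + t) := by
    intro t s
    have := h.traj_dist w.2 (X w (Y t)) (fun s => Y (s + t)) (hX w (Y t))
      (fun s => (hY (s + t)).comp_add_const s t) s
    simp only [hX0, zero_add, sub_self, norm_zero, zero_mul] at this
    exact sub_eq_zero.1 (norm_le_zero_iff.1 this)
  have hcint : ∀ t, IntegrableOn (fun s => exp s * n s) (Iic t) := by
    have h0 : IntegrableOn (fun s => exp s * n s) (Iic 0) :=
      (aux_int n hnc (3 / 4 * ρ) 0 one_pos (fun s _ => by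
        simpa using h.bddN _ (Y s) (w.2.bd _))).1
    intro t
    rcases le_total t 0 with ht | ht
    · exact h0.mono_set (Iic_subset_Iic.2 ht)
    · rw [← Iic_union_Icc_eq_Iic ht]
      exact h0.union ((by fun_prop : Continuous fun s => exp s * n s).continuousOn.integrableOn_Icc)
  have hform : ∀ t, w.1 (Y t) = exp (-t) * ((∫ s in Iic (0:ℝ), exp s * n s)
      + ∫ s in (0:ℝ)..t, exp s * n s) := by
    intro t
    rw [← intervalIntegral.integral_Iic_sub_Iic (hcint 0) (hcint t), add_sub_cancel, hwT]
    have h1 : (fun s => exp s * N (w.1 (X w (Y t) s), X w (Y t) s)) =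
        fun s => exp (-t) * (exp (s + t) * n (s + t)) := by
      funext s
      rw [hsh, ← mul_assoc, ← exp_add, show -t + (s + t) = s by ring]
    simp only [Tf]
    rw [h1, integral_const_mul]
    congr 1
    have h2 := (measurePreserving_add_right (volume : Measure ℝ) t).setIntegral_preimage_emb
      (measurableEmbedding_addRight t) (fun s => exp s * n s) (Iic t)
    rw [← h2]
    congr 2
    ext s; simp
  have hfun : (fun s => w.1 (Y s)) = fun t => exp (-t) * ((∫ s in Iic (0:ℝ), exp s * n s)
      + ∫ s in (0:ℝ)..t, exp s * n s) := funext hform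
  rw [hfun]
  have hd1 : HasDerivAt (fun t => ∫ s in (0:ℝ)..t, exp s * n s) (exp t * n t) t :=
    ((by fun_prop : Continuous fun s => exp s * n s).integral_hasStrictDerivAt 0 t).hasDerivAt
  have hd2 := ((hasDerivAt_neg t).exp).mul (hd1.const_add (∫ s in Iic (0:ℝ), exp s * n s))
  refine hd2.congr_deriv ?_
  have hNn : N (w.1 (Y t), Y t) = n t := rfl
  rw [hNn, hform t]
  have : exp (-t) * (exp t * n t) = n t := by
    rw [← mul_assoc, ← exp_add]; simp
  rw [this]
  ring

end SlowPhaseHelpers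


section SlowPhaseHelpers
open Real Set Filter Topology MeasureTheory
open scoped NNReal BoundedContinuousFunction

/-- Modulus of the second difference of a graph function. -/
def AuxQ {E : Type*} [NormedAddCommGroup E] [NormedSpace ℝ E] (w : E → ℝ) (L m : ℝ) : Prop :=
  ∃ δ > (0:ℝ), ∀ x₁ x₂ x₃ x₄ : E, ‖x₁ - x₃‖ ≤ δ → ‖x₂ - x₄‖ ≤ δ →
    |w x₁ - w x₂ - w x₃ + w x₄| ≤ L * ‖x₁ - x₂ - x₃ + x₄‖ + m * ‖x₁ - x₂‖

set_option maxHeartbeats 2000000 in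
theorem AuxSys.q_step {E : Type*} [NormedAddCommGroup E] [NormedSpace ℝ E] [CompleteSpace E]
    {N : ℝ × E → ℝ} {V : ℝ × E → E} {C ρ : ℝ} (h : AuxSys N V C ρ) {w : E → ℝ}
    (hw : AuxAdm C ρ w) (hinv : ∀ X : ℝ → E, (∀ t, HasDerivAt X (V (w (X t), X t)) t) →
      ∀ t, HasDerivAt (fun s => w (X s)) (-w (X t) + N (w (X t), X t)) t)
    (m : ℝ) (hm : 0 < m) (hQ : AuxQ w (1 / (8 * C)) m) : AuxQ w (1 / (8 * C)) (0.8 * m) := by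
  obtain ⟨c0, c1, c2, c3, c4, c5⟩ := h.small
  obtain ⟨δ₁, hδ₁, hQ⟩ := hQ
  obtain ⟨δ₂, hδ₂, hN4⟩ := aux_four N ρ (1 / (64 * C)) (1 / (64 * C)) h.cN h.uN
    (fun z x c v hz => (h.bN z x c v hz).trans (le_of_eq (by ring))) (m / 10) (by positivity)
  obtain ⟨δ₃, hδ₃, hV4⟩ := aux_four V ρ C (1 / (64 * C)) h.cV h.uV h.bV (m / 10) (by positivity)
  have hexp : exp (1 / 4) ≤ 1.3 := by
    have h1 := Real.exp_bound_div_one_sub_of_interval (x := 1/4) (by norm_num) (by norm_num)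
    have h2 : exp (1/4) ^ 4 = exp 1 := by rw [← exp_nat_mul]; norm_num
    by_contra! hc
    have h3 : (1.3:ℝ)^4 ≤ exp (1/4) ^ 4 := by gcongr
    have := exp_one_lt_d9
    rw [h2] at h3
    norm_num at h3 this
    linarith
  have hexps : ∀ s : ℝ, |s| ≤ 1 → exp (|s| / 4) ≤ 1.3 := fun s hs =>
    (exp_le_exp.2 (by linarith)).trans hexp
  obtain ⟨δ, hδ, hd1, hd2, hd3⟩ : ∃ δ > (0:ℝ), 1.3 * δ < δ₁ ∧ 1.3 * δ < δ₂ ∧ 1.3 * δ < δ₃ := by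
    refine ⟨min δ₁ (min δ₂ δ₃) / 2, by positivity, ?_⟩
    have a1 := min_le_left δ₁ (min δ₂ δ₃)
    have a2 := (min_le_right δ₁ (min δ₂ δ₃)).trans (min_le_left _ _)
    have a3 := (min_le_right δ₁ (min δ₂ δ₃)).trans (min_le_right _ _)
    have : 0 < min δ₁ (min δ₂ δ₃) := by positivity
    norm_num
    refine ⟨by linarith, by linarith, by linarith⟩
  refine ⟨δ, hδ, fun x₁ x₂ x₃ x₄ h13 h24 => ?_⟩
  obtain ⟨X₁, i1, t1⟩ := h.flow hw x₁
  obtain ⟨X₂, i2, t2⟩ := h.flow hw x₂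
  obtain ⟨X₃, i3, t3⟩ := h.flow hw x₃
  obtain ⟨X₄, i4, t4⟩ := h.flow hw x₄
  have hL : 1 / (8 * C) ≤ 1 / 8 := by rw [c4]; linarith
  have hL0 : 0 < 1 / (8 * C) := by positivity
  have hu : ∀ x y : E, ‖(w x, x) - (w y, y)‖ ≤ ‖x - y‖ := by
    intro x y
    rw [Prod.norm_def]
    refine max_le ?_ le_rfl
    have := hw.lip x y
    simp only [Prod.fst_sub, Real.norm_eq_abs]
    nlinarith [norm_nonneg (x - y)]
  have hdist : ∀ (X Y : ℝ → E), (∀ t, HasDerivAt X (V (w (X t), X t)) t) →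
      (∀ t, HasDerivAt Y (V (w (Y t), Y t)) t) → ∀ s, |s| ≤ 1 →
      ‖X s - Y s‖ ≤ 1.3 * ‖X 0 - Y 0‖ := by
    intro X Y hX hY s hs
    have := h.traj_dist hw X Y hX hY s
    nlinarith [hexps s hs, norm_nonneg (X 0 - Y 0)]
  have d13 : ∀ s, |s| ≤ 1 → ‖X₁ s - X₃ s‖ ≤ 1.3 * δ := fun s hs => by
    have := hdist X₁ X₃ t1 t3 s hs
    rw [i1, i3] at this; nlinarith
  have d24 : ∀ s, |s| ≤ 1 → ‖X₂ s - X₄ s‖ ≤ 1.3 * δ := fun s hs => by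
    have := hdist X₂ X₄ t2 t4 s hs
    rw [i2, i4] at this; nlinarith
  set A0 := ‖x₁ - x₂ - x₃ + x₄‖ with hA0
  set B0 := ‖x₁ - x₂‖ with hB0
  have hA00 : 0 ≤ A0 := norm_nonneg _
  have hB00 : 0 ≤ B0 := norm_nonneg _
  have d12 : ∀ s, |s| ≤ 1 → ‖X₁ s - X₂ s‖ ≤ 1.3 * B0 := fun s hs => by
    have := hdist X₁ X₂ t1 t2 s hs
    rwa [i1, i2] at this
  set L := 1 / (8 * C) with hLdef
  set η := 1 / (64 * C) with hη
  -- bound on `D` in terms of `A`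
  have hD : ∀ s, |s| ≤ 1 → |w (X₁ s) - w (X₂ s) - w (X₃ s) + w (X₄ s)| ≤
      L * ‖X₁ s - X₂ s - X₃ s + X₄ s‖ + 1.3 * m * B0 := by
    intro s hs
    have a1 := hQ (X₁ s) (X₂ s) (X₃ s) (X₄ s) ((d13 s hs).trans hd1.le) ((d24 s hs).trans hd1.le)
    have a2 := mul_le_mul_of_nonneg_left (d12 s hs) hm.le
    linarith
  have hA : ∀ s, |s| ≤ 1 → ‖X₁ s - X₂ s - X₃ s + X₄ s‖ ≤
      1.3 * A0 + 1.56 * ((C * m + m / 10) * B0) := by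
    intro s hs
    have hg := aux_gron (fun s => X₁ s - X₂ s - X₃ s + X₄ s) _ 1 (1.3 * ((C * m + m / 10) * B0))
      (fun s => (((t1 s).sub (t2 s)).sub (t3 s)).add (t4 s)) (fun s hs => by
        have a1 := hV4 (w (X₁ s), X₁ s) (w (X₂ s), X₂ s) (w (X₃ s), X₃ s) (w (X₄ s), X₄ s)
          (hw.bd _) (hw.bd _) ((hu _ _).trans_lt ((d13 s hs).trans_lt hd3))
          ((hu _ _).trans_lt ((d24 s hs).trans_lt hd3))
        simp only at a1
        have a2 := (hu (X₁ s) (X₂ s)).trans (d12 s hs)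
        have a3 := mul_le_mul_of_nonneg_left a2 (by positivity : 0 ≤ m / 10)
        have a4 := mul_le_mul_of_nonneg_left (hD s hs) c0.le
        rw [mul_add, ← mul_assoc, c3] at a4
        have a5 := mul_le_mul_of_nonneg_right c2 (norm_nonneg (X₁ s - X₂ s - X₃ s + X₄ s))
        have a6 := norm_nonneg (X₁ s - X₂ s - X₃ s + X₄ s)
        norm_num at a3 a4 ⊢
        nlinarith) s hs
    simp only [i1, i2, i3, i4] at hg
    rw [← hA0] at hg
    refine hg.trans ?_
    have b1 := hexps s hs
    have b2 : 0 ≤ (C * m + m / 10) * B0 := by positivity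
    have b3 := mul_le_mul_of_nonneg_left b1 hA00
    have b4 := mul_le_mul_of_nonneg_left b1 b2
    norm_num at b3 b4 ⊢
    linarith
  have hstep := aux_step (fun s => w (X₁ s) - w (X₂ s) - w (X₃ s) + w (X₄ s))
    (fun s => N (w (X₁ s), X₁ s) - N (w (X₂ s), X₂ s) - N (w (X₃ s), X₃ s) + N (w (X₄ s), X₄ s))
    0 (0.19 * (L * A0) + 0.2 * (m * B0)) (fun s => by
      refine ((((hinv X₁ t1 s).sub (hinv X₂ t2 s)).sub (hinv X₃ t3 s)).add
        (hinv X₄ t4 s)).congr_deriv ?_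
      ring) (fun s hs => by
        have hs1 : |s| ≤ 1 := abs_le.2 ⟨by linarith [hs.1], by linarith [hs.2]⟩
        have a1 := hN4 (w (X₁ s), X₁ s) (w (X₂ s), X₂ s) (w (X₃ s), X₃ s) (w (X₄ s), X₄ s)
          (hw.bd _) (hw.bd _) ((hu _ _).trans_lt ((d13 s hs1).trans_lt hd2))
          ((hu _ _).trans_lt ((d24 s hs1).trans_lt hd2))
        simp only [Real.norm_eq_abs] at a1
        refine a1.trans ?_
        have a2 := (hu (X₁ s) (X₂ s)).trans (d12 s hs1)
        have a3 := mul_le_mul_of_nonneg_left a2 (by positivity : 0 ≤ m / 10)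
        have a4 := mul_le_mul_of_nonneg_left (hD s hs1) c1.le
        have a5 := hA s hs1
        set A := ‖X₁ s - X₂ s - X₃ s + X₄ s‖ with hAs
        have hA_0 : 0 ≤ A := norm_nonneg _
        have a6 := mul_le_mul_of_nonneg_left a5 c1.le
        have a7 : η * (1.3 * A0 + 1.56 * ((C * m + m / 10) * B0)) =
          1.3 * (η * A0) + 1.56 * ((C * η) * m * B0 + η * (m / 10 * B0)) := by ring
        rw [a7, c5] at a6
        have a8 : η * (m * B0) ≤ 1 / 64 * (m * B0) := mul_le_mul_of_nonneg_right c2 (by positivity)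
        have a9 : η * L * A ≤ 1 / 8 * (η * A) := by nlinarith [mul_nonneg c1.le hA_0]
        have a10 : L * A0 = 8 * (η * A0) := by rw [c4]; ring
        have a11 : 0 ≤ m * B0 := by positivity
        have a12 : 0 ≤ η * A0 := by positivity
        norm_num at a3 a4 a6 ⊢
        nlinarith)
  simp only [i1, i2, i3, i4] at hstep
  have hs1 : |(0:ℝ) - 1| ≤ 1 := by norm_num
  have e1 := hD (0 - 1) hs1
  have e2 := hA (0 - 1) hs1
  have e3 := mul_le_mul_of_nonneg_left e2 hL0.le
  have e4 : L * (1.3 * A0 + 1.56 * ((C * m + m / 10) * B0)) =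
    1.3 * (L * A0) + 1.56 * ((C * L) * m * B0 + L * (m / 10 * B0)) := by ring
  rw [e4, c3] at e3
  have e5 : L * (m * B0) ≤ 1 / 8 * (m * B0) := mul_le_mul_of_nonneg_right hL (by positivity)
  have e6 : 0 ≤ m * B0 := by positivity
  have e7 : 0 ≤ L * A0 := by positivity
  norm_num at e1 e3 hstep ⊢
  nlinarith

/-- A smooth invariant graph of the scaled system. -/
structure AuxMan {E : Type*} [NormedAddCommGroup E] [NormedSpace ℝ E]
    (N : ℝ × E → ℝ) (V : ℝ × E → E) (C ρ : ℝ) (w : E → ℝ) : Prop where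
  adm : AuxAdm C ρ w
  c1 : ContDiff ℝ 1 w
  fd : ∀ x v, |fderiv ℝ w x v| ≤ 1 / (8 * C) * ‖v‖
  pde : ∀ x, fderiv ℝ w x (V (w x, x)) = - w x + N (w x, x)

theorem AuxSys.exists_man {E : Type*} [NormedAddCommGroup E] [NormedSpace ℝ E]
    [FiniteDimensional ℝ E]
    {N : ℝ × E → ℝ} {V : ℝ × E → E} {C ρ : ℝ} (h : AuxSys N V C ρ) :
    ∃ w, AuxMan N V C ρ w := by
  haveI : CompleteSpace E := FiniteDimensional.complete ℝ E
  obtain ⟨w, hw, hinv⟩ := h.exists_lip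
  obtain ⟨c0, c1, c2, c3, c4, c5⟩ := h.small
  have hL0 : 0 < 1 / (8 * C) := by positivity
  have hLip : LipschitzWith (Real.toNNReal (1 / (8 * C))) w :=
    LipschitzWith.of_dist_le_mul fun x y => by
      rw [dist_eq_norm, dist_eq_norm, Real.coe_toNNReal _ hL0.le]; exact hw.lip x y
  have hQ0 : AuxQ w (1 / (8 * C)) (2 * (1 / (8 * C))) := by
    refine ⟨1, one_pos, fun x₁ x₂ x₃ x₄ _ _ => ?_⟩
    have a1 := hw.lip x₁ x₂
    have a2 := hw.lip x₃ x₄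
    have a3 : ‖x₃ - x₄‖ ≤ ‖x₁ - x₂ - x₃ + x₄‖ + ‖x₁ - x₂‖ := by
      have := norm_sub_le (x₁ - x₂) (x₁ - x₂ - x₃ + x₄)
      rw [show x₁ - x₂ - (x₁ - x₂ - x₃ + x₄) = x₃ - x₄ by abel] at this
      linarith
    have a4 := abs_sub (w x₁ - w x₂) (w x₃ - w x₄)
    rw [show w x₁ - w x₂ - (w x₃ - w x₄) = w x₁ - w x₂ - w x₃ + w x₄ by ring] at a4
    nlinarith
  have hQn : ∀ n : ℕ, AuxQ w (1 / (8 * C)) (0.8 ^ n * (2 * (1 / (8 * C)))) := by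
    intro n
    induction n with
    | zero => simpa using hQ0
    | succ n ih =>
      have := h.q_step hw hinv _ (by positivity) ih
      rwa [pow_succ', mul_assoc]
  have hC1 : ContDiff ℝ 1 w := by
    refine aux_c1 w _ hLip fun m hm => ?_
    obtain ⟨n, hn⟩ := exists_pow_lt_of_lt_one (div_pos hm (by positivity : 0 < 2 * (1 / (8 * C))))
      (by norm_num : (0.8:ℝ) < 1)
    rw [lt_div_iff₀ (by positivity)] at hn
    obtain ⟨δ, hδ, hq⟩ := hQn n
    refine ⟨δ, hδ, fun x y k hxy _ => ?_⟩
    have := hq (x + k) x (y + k) y (by simpa using hxy) hxy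
    rw [show x + k - x - (y + k) + y = 0 by abel, norm_zero, mul_zero, zero_add,
      add_sub_cancel_left] at this
    exact this.trans (mul_le_mul_of_nonneg_right hn.le (norm_nonneg _))
  refine ⟨w, hw, hC1, fun x v => ?_, fun x => ?_⟩
  · have a1 := norm_fderiv_le_of_lipschitz ℝ hLip (x₀ := x)
    rw [Real.coe_toNNReal _ hL0.le] at a1
    have a2 := (fderiv ℝ w x).le_opNorm v
    rw [Real.norm_eq_abs] at a2
    exact a2.trans (mul_le_mul_of_nonneg_right a1 (norm_nonneg _))
  · obtain ⟨X, hX0, hX⟩ := h.flow hw x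
    have a1 := hinv X hX 0
    have a2 : HasDerivAt (fun s => w (X s)) (fderiv ℝ w (X 0) (V (w (X 0), X 0))) 0 :=
      ((hC1.differentiable one_ne_zero (X 0)).hasFDerivAt).comp_hasDerivAt 0 (hX 0)
    have := a2.unique a1
    rwa [hX0] at this

end SlowPhaseHelpers


section SlowPhaseHelpers
open Real Set Filter Topology MeasureTheory
open scoped NNReal BoundedContinuousFunction

theorem AuxMan.hasDerivAt {E : Type*} [NormedAddCommGroup E] [NormedSpace ℝ E]
    {N : ℝ × E → ℝ} {V : ℝ × E → E} {C ρ : ℝ} {w : E → ℝ} (hw : AuxMan N V C ρ w)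
    {X : ℝ → E} {X' : E} {t : ℝ} (hX : HasDerivAt X X' t) :
    HasDerivAt (fun s => w (X s)) (fderiv ℝ w (X t) X') t :=
  ((hw.c1.differentiable one_ne_zero (X t)).hasFDerivAt).comp_hasDerivAt t hX

theorem AuxSys.compare {E : Type*} [NormedAddCommGroup E] [NormedSpace ℝ E] [CompleteSpace E]
    {N N' : ℝ × E → ℝ} {V V' : ℝ × E → E} {C ρ : ℝ} (h : AuxSys N V C ρ)
    {w w' : E → ℝ} (hw : AuxMan N V C ρ w) (hw' : AuxMan N' V' C ρ w')
    (ν ν' : ℝ) (hν : ∀ z x, |z| ≤ ρ → |N (z, x) - N' (z, x)| ≤ ν)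
    (hν' : ∀ z x, |z| ≤ ρ → ‖V (z, x) - V' (z, x)‖ ≤ ν') (x : E) :
    |w x - w' x| ≤ 3 * (ν + ν') := by
  obtain ⟨c0, c1, c2, c3, c4, c5⟩ := h.small
  have hL : 1 / (8 * C) ≤ 1 / 8 := by rw [c4]; linarith
  have hL0 : 0 < 1 / (8 * C) := by positivity
  have hν0 : 0 ≤ ν := (abs_nonneg _).trans (hν 0 x (by simpa using h.hρ.le))
  have hν0' : 0 ≤ ν' := (norm_nonneg _).trans (hν' 0 x (by simpa using h.hρ.le))
  obtain ⟨X, hX0, hX⟩ := h.flow hw.adm x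
  have key := aux_bdd (fun s => w (X s) - w' (X s))
    (fun s => (N (w (X s), X s) - N' (w' (X s), X s)) -
      fderiv ℝ w' (X s) (V (w (X s), X s) - V' (w' (X s), X s))) (ν + ν') (ρ + ρ) (by positivity)
    (fun s => by
      refine ((hw.hasDerivAt (hX s)).sub (hw'.hasDerivAt (hX s))).congr_deriv ?_
      rw [hw.pde, map_sub, hw'.pde]; ring)
    (fun s => by
      have b1 := hw.adm.bd (X s)
      have b2 := hw'.adm.bd (X s)
      have a1 := h.lipN _ _ (X s) (X s) b1 b2
      have a2 := h.lipV _ _ (X s) (X s) b1 b2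
      have a3 := hν _ (X s) b2
      have a4 := hν' _ (X s) b2
      simp only [sub_self, norm_zero, mul_zero, add_zero] at a1 a2
      have a5 := hw'.fd (X s) (V (w (X s), X s) - V' (w' (X s), X s))
      have a6 : ‖V (w (X s), X s) - V' (w' (X s), X s)‖ ≤ C * |w (X s) - w' (X s)| + ν' := by
        have := norm_sub_le_norm_sub_add_norm_sub (V (w (X s), X s)) (V (w' (X s), X s))
          (V' (w' (X s), X s))
        linarith
      have a7 : |N (w (X s), X s) - N' (w' (X s), X s)| ≤
          1 / (64 * C) * |w (X s) - w' (X s)| + ν := by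
        have := abs_sub_le (N (w (X s), X s)) (N (w' (X s), X s)) (N' (w' (X s), X s))
        linarith
      have a8 := mul_le_mul_of_nonneg_left a6 hL0.le
      have a9 : 1 / (8 * C) * (C * |w (X s) - w' (X s)| + ν') =
        C * (1 / (8 * C)) * |w (X s) - w' (X s)| + 1 / (8 * C) * ν' := by ring
      rw [a9, c3] at a8
      have a10 := abs_sub (N (w (X s), X s) - N' (w' (X s), X s))
        (fderiv ℝ w' (X s) (V (w (X s), X s) - V' (w' (X s), X s)))
      have a11 := mul_le_mul_of_nonneg_right c2 (abs_nonneg (w (X s) - w' (X s)))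
      have a12 := mul_le_mul_of_nonneg_right hL hν0'
      have a13 := abs_nonneg (w (X s) - w' (X s))
      linarith)
    (fun s => (abs_sub _ _).trans (add_le_add (hw.adm.bd _) (hw'.adm.bd _))) 0
  simpa [hX0] using key

theorem AuxSys.small_man {E : Type*} [NormedAddCommGroup E] [NormedSpace ℝ E] [CompleteSpace E]
    {N : ℝ × E → ℝ} {V : ℝ × E → E} {C ρ : ℝ} (h : AuxSys N V C ρ)
    {w : E → ℝ} (hw : AuxMan N V C ρ w) (ν : ℝ) (hν : ∀ x, |N (0, x)| ≤ ν) (x : E) :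
    |w x| ≤ 3 * ν := by
  obtain ⟨c0, c1, c2, c3, c4, c5⟩ := h.small
  have hν0 : 0 ≤ ν := (abs_nonneg _).trans (hν x)
  obtain ⟨X, hX0, hX⟩ := h.flow hw.adm x
  have key := aux_bdd (fun s => w (X s)) (fun s => N (w (X s), X s)) ν ρ hν0
    (fun s => (hw.hasDerivAt (hX s)).congr_deriv (hw.pde _))
    (fun s => by
      have a1 := h.lipN (w (X s)) 0 (X s) (X s) (hw.adm.bd _) (by simpa using h.hρ.le)
      simp only [sub_self, norm_zero, mul_zero, add_zero, sub_zero] at a1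
      have a2 := abs_add_le (N (w (X s), X s) - N (0, X s)) (N (0, X s))
      rw [sub_add_cancel] at a2
      have a3 := mul_le_mul_of_nonneg_right c2 (abs_nonneg (w (X s)))
      have a4 := abs_nonneg (w (X s))
      linarith [hν (X s)])
    (fun s => hw.adm.bd _) 0
  simpa [hX0] using key

theorem AuxSys.translate {E : Type*} [NormedAddCommGroup E] [NormedSpace ℝ E] [CompleteSpace E]
    {N : ℝ × E → ℝ} {V : ℝ × E → E} {C ρ : ℝ} (h : AuxSys N V C ρ)
    {w : E → ℝ} (hw : AuxMan N V C ρ w) (p : E) (hN : ∀ z x, N (z, x + p) = N (z, x))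
    (hV : ∀ z x, V (z, x + p) = V (z, x)) (x : E) : w (x + p) = w x := by
  have hw' : AuxMan N V C ρ (fun x => w (x + p)) := by
    refine ⟨⟨fun x => hw.adm.bd _, fun x y => by simpa using hw.adm.lip (x + p) (y + p)⟩,
      hw.c1.comp (contDiff_id.add contDiff_const), fun x v => ?_, fun x => ?_⟩
    · rw [fderiv_comp_add_right]; exact hw.fd _ v
    · rw [fderiv_comp_add_right, ← hN, ← hV]; exact hw.pde _
  have := h.compare hw' hw 0 0 (by simp) (by simp) x
  simp only [add_zero, mul_zero] at this
  exact sub_eq_zero.1 (abs_nonpos_iff.1 this)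

theorem AuxSys.phase {E : Type*} [NormedAddCommGroup E] [NormedSpace ℝ E] [FiniteDimensional ℝ E]
    {N : ℝ × E → ℝ} {V : ℝ × E → E} {C ρ : ℝ} (h : AuxSys N V C ρ)
    {w : E → ℝ} (hw : AuxMan N V C ρ w) (z : ℝ → ℝ) (x : ℝ → E)
    (hz : ∀ t, HasDerivAt z (-z t + N (z t, x t)) t)
    (hx : ∀ t, HasDerivAt x (V (z t, x t)) t) (hz0 : |z 0| ≤ ρ) :
    ∃ Y : ℝ → E, (∀ t, HasDerivAt Y (V (w (Y t), Y t)) t) ∧ ∀ t, 0 ≤ t →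
      |z t - w (Y t)| ≤ 2 * exp (-(3 / 4 * t)) * |z 0 - w (x 0)| ∧
      ‖x t - Y t‖ ≤ 2 * C * exp (-(3 / 4 * t)) * |z 0 - w (x 0)| := by
  haveI : CompleteSpace E := FiniteDimensional.complete ℝ E
  haveI : ProperSpace E := FiniteDimensional.proper ℝ E
  obtain ⟨c0, c1, c2, c3, c4, c5⟩ := h.small
  have hL0 : 0 < 1 / (8 * C) := by positivity
  -- barrier
  have hbar : ∀ t, 0 ≤ t → |z t| ≤ ρ := by
    intro t ht
    have := image_le_of_deriv_right_lt_deriv_boundary (f := fun s => z s ^ 2)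
      (f' := fun s => 2 * z s * (-z s + N (z s, x s))) (a := 0) (b := t)
      (fun s _ => ((hz s).continuousAt.pow 2).continuousWithinAt)
      (fun s _ => (((hz s).pow 2).congr_deriv (by norm_num)).hasDerivWithinAt)
      (B := fun _ => ρ ^ 2) (B' := fun _ => 0)
      (by rw [← sq_abs]; exact pow_le_pow_left₀ (abs_nonneg _) hz0 2)
      (fun s => hasDerivAt_const _ _) (fun s _ hs => by
        have hs' : z s ^ 2 = ρ ^ 2 := hs
        have e1 : |z s| = ρ := by
          have := (sq_eq_sq_iff_abs_eq_abs _ _).1 hs'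
          rwa [abs_of_pos h.hρ] at this
        have e2 := h.bddN (z s) (x s) e1.le
        have e3 : z s * N (z s, x s) ≤ ρ * (3 / 4 * ρ) := by
          calc z s * N (z s, x s) ≤ |z s * N (z s, x s)| := le_abs_self _
            _ = |z s| * |N (z s, x s)| := abs_mul _ _
            _ ≤ _ := by rw [e1]; exact mul_le_mul_of_nonneg_left e2 h.hρ.le
        change 2 * z s * (-z s + N (z s, x s)) < 0
        nlinarith [h.hρ]) (x := t) ⟨ht, le_rfl⟩
    have h2 : z t ^ 2 ≤ ρ ^ 2 := this
    exact abs_le_of_sq_le_sq h2 h.hρ.le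
  set ζ : ℝ → ℝ := fun t => z t - w (x t) with hζ
  have hVz : ∀ t, 0 ≤ t → ‖V (z t, x t) - V (w (x t), x t)‖ ≤ C * |ζ t| := by
    intro t ht
    have := h.lipV _ _ (x t) (x t) (hbar t ht) (hw.adm.bd (x t))
    simpa using this
  have hζd : ∀ t, HasDerivAt ζ (-ζ t + ((N (z t, x t) - N (w (x t), x t)) -
      fderiv ℝ w (x t) (V (z t, x t) - V (w (x t), x t)))) t := by
    intro t
    refine ((hz t).sub (hw.hasDerivAt (hx t))).congr_deriv ?_
    rw [map_sub, hw.pde]; ring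
  have hζn : ∀ t, 0 ≤ t → |(N (z t, x t) - N (w (x t), x t)) -
      fderiv ℝ w (x t) (V (z t, x t) - V (w (x t), x t))| ≤ 1 / 4 * |ζ t| := by
    intro t ht
    have a1 := h.lipN _ _ (x t) (x t) (hbar t ht) (hw.adm.bd (x t))
    simp only [sub_self, norm_zero, mul_zero, add_zero] at a1
    have a2 := hw.fd (x t) (V (z t, x t) - V (w (x t), x t))
    have a3 := mul_le_mul_of_nonneg_left (hVz t ht) hL0.le
    rw [← mul_assoc, mul_comm (1 / (8 * C)) C, c3] at a3
    have a4 := abs_sub (N (z t, x t) - N (w (x t), x t))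
      (fderiv ℝ w (x t) (V (z t, x t) - V (w (x t), x t)))
    have a5 := mul_le_mul_of_nonneg_right c2 (abs_nonneg (ζ t))
    have a6 := abs_nonneg (ζ t)
    have a7 : |z t - w (x t)| = |ζ t| := rfl
    rw [a7] at a1
    linarith
  have hζb : ∀ t, 0 ≤ t → |ζ t| ≤ exp (-(3 / 4 * t)) * |ζ 0| := by
    intro t ht
    have hd : ∀ s, HasDerivAt (fun s => exp (3 / 2 * s) * ζ s ^ 2)
        (exp (3 / 2 * s) * (3 / 2) * ζ s ^ 2 + exp (3 / 2 * s) * (2 * ζ s * (-ζ s +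
          ((N (z s, x s) - N (w (x s), x s)) -
            fderiv ℝ w (x s) (V (z s, x s) - V (w (x s), x s)))))) s := by
      intro s
      have e1 : HasDerivAt (fun s => exp (3 / 2 * s)) (exp (3 / 2 * s) * (3 / 2)) s := by
        have := ((hasDerivAt_id s).const_mul (3 / 2 : ℝ)).exp
        simpa using this
      refine (e1.mul ((hζd s).pow 2)).congr_deriv ?_
      norm_num
    have hanti : AntitoneOn (fun s => exp (3 / 2 * s) * ζ s ^ 2) (Ici 0) := by
      refine antitoneOn_of_deriv_nonpos (convex_Ici 0)
        (fun s _ => (hd s).continuousAt.continuousWithinAt)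
        (fun s _ => (hd s).differentiableAt.differentiableWithinAt) fun s hs => ?_
      rw [interior_Ici] at hs
      rw [(hd s).deriv]
      have e1 := hζn s (le_of_lt hs)
      set n := (N (z s, x s) - N (w (x s), x s)) -
            fderiv ℝ w (x s) (V (z s, x s) - V (w (x s), x s)) with hn
      have e2 : ζ s * n ≤ 1 / 4 * ζ s ^ 2 := by
        calc ζ s * n ≤ |ζ s * n| := le_abs_self _
          _ = |ζ s| * |n| := abs_mul _ _
          _ ≤ |ζ s| * (1 / 4 * |ζ s|) := mul_le_mul_of_nonneg_left e1 (abs_nonneg _)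
          _ = 1 / 4 * ζ s ^ 2 := by rw [← sq_abs (ζ s)]; ring
      have e3 : 3 / 2 * ζ s ^ 2 + 2 * ζ s * (-ζ s + n) ≤ 0 := by nlinarith [sq_nonneg (ζ s)]
      nlinarith [exp_pos (3 / 2 * s)]
    have h1 := hanti (mem_Ici.2 le_rfl) (mem_Ici.2 ht) ht
    simp only [mul_zero, exp_zero, one_mul] at h1
    have h2 : ζ t ^ 2 ≤ (exp (-(3 / 4 * t)) * |ζ 0|) ^ 2 := by
      rw [mul_pow, sq_abs, ← exp_nat_mul]
      have h3 := mul_le_mul_of_nonneg_left h1 (exp_pos (-(3 / 2 * t))).le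
      rw [← mul_assoc, ← exp_add, neg_add_cancel, exp_zero, one_mul] at h3
      rw [show ((2:ℕ):ℝ) * -(3 / 4 * t) = -(3 / 2 * t) by push_cast; ring]
      exact h3
    exact abs_le_of_sq_le_sq h2 (by positivity)
  -- approximating manifold trajectories
  have happ : ∀ n : ℕ, ∃ Y : ℝ → E, (∀ t, HasDerivAt Y (V (w (Y t), Y t)) t) ∧
      ∀ t : ℝ, 0 ≤ t → t ≤ n → ‖x t - Y t‖ ≤ 2 * C * |ζ 0| * exp (-(3 / 4 * t)) := by
    intro n
    obtain ⟨Z, hZ0, hZ⟩ := h.flow hw.adm (x n)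
    have hY : ∀ t, HasDerivAt (fun t => Z (t - n)) (V (w (Z (t - n)), Z (t - n))) t := fun t =>
      (hZ (t - n)).comp_sub_const t n
    refine ⟨fun t => Z (t - n), hY, fun t ht htn => ?_⟩
    rw [← div_le_iff₀ (exp_pos _)]
    refine le_of_forall_gt_imp_ge_of_dense fun c hc => ?_
    rw [div_le_iff₀ (exp_pos _)]
    have hrev : ∀ (F : ℝ → E) (F' : E) (s : ℝ), HasDerivAt F F' (n - s) →
        HasDerivAt (fun s => F (n - s)) (-F') s := fun F F' s hF => by
      have := hF.scomp s ((hasDerivAt_id s).const_sub (n:ℝ))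
      simpa [Function.comp_def] using this
    have hfd : ∀ s, HasDerivAt (fun s => x (n - s) - Z (n - s - n))
        (-V (z (n - s), x (n - s)) - -V (w (Z (n - s - n)), Z (n - s - n))) s := fun s =>
      (hrev x _ s (hx (n - s))).sub (hrev (fun t => Z (t - n)) _ s (hY (n - s)))
    have hBd : ∀ s, HasDerivAt (fun s => c * exp (-(3 / 4 * (n - s))))
        (3 / 4 * (c * exp (-(3 / 4 * (n - s))))) s := by
      intro s
      have := (((((hasDerivAt_id s).const_sub (n:ℝ)).const_mul (3 / 4 : ℝ)).neg).exp).const_mul c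
      refine this.congr_deriv ?_
      simp; ring
    have hCζ : 0 ≤ C * |ζ 0| := by positivity
    have := image_norm_le_of_norm_deriv_right_lt_deriv_boundary
      (f := fun s => x (n - s) - Z (n - s - n)) (a := 0) (b := n)
      (f' := fun s => -V (z (n - s), x (n - s)) - -V (w (Z (n - s - n)), Z (n - s - n)))
      (fun s _ => (hfd s).continuousAt.continuousWithinAt)
      (fun s _ => (hfd s).hasDerivWithinAt)
      (B := fun s => c * exp (-(3 / 4 * (n - s))))
      (B' := fun s => 3 / 4 * (c * exp (-(3 / 4 * (n - s)))))
      (by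
        simp only [sub_zero, sub_self, hZ0, norm_zero]
        exact mul_nonneg (by linarith) (exp_pos _).le)
      hBd (fun s hs hsB => by
        have hns : 0 ≤ n - s := by linarith [hs.2]
        have e1 := hVz _ hns
        have e2 := hζb _ hns
        have e3 := h.lipU hw.adm (x (n - s)) (Z (n - s - n))
        have e4 : ‖-V (z (n - s), x (n - s)) - -V (w (Z (n - s - n)), Z (n - s - n))‖ ≤
            ‖V (z (n - s), x (n - s)) - V (w (x (n - s)), x (n - s))‖ +
            ‖V (w (x (n - s)), x (n - s)) - V (w (Z (n - s - n)), Z (n - s - n))‖ := by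
          rw [neg_sub_neg, norm_sub_rev]
          exact norm_sub_le_norm_sub_add_norm_sub _ _ _
        have e5 := mul_le_mul_of_nonneg_left e2 c0.le
        have e6 := exp_pos (-(3 / 4 * (n - s)))
        rw [hsB] at e3
        have e7 := mul_lt_mul_of_pos_right hc e6
        nlinarith) (x := n - t) ⟨by linarith, by linarith⟩
    simpa using this
  choose Y hY hYb using happ
  have hcpt : ∀ n : ℕ, Y n 0 ∈ Metric.closedBall (x 0) (2 * C * |ζ 0|) := fun n => by
    have := hYb n 0 le_rfl (Nat.cast_nonneg n)
    rw [Metric.mem_closedBall, dist_comm, dist_eq_norm]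
    simpa using this
  obtain ⟨y0, -, φ, hφ, hlim⟩ := (isCompact_closedBall (x 0) (2 * C * |ζ 0|)).tendsto_subseq hcpt
  obtain ⟨X, hX0, hX⟩ := h.flow hw.adm y0
  have hlimt : ∀ t, Tendsto (fun k => Y (φ k) t) atTop (𝓝 (X t)) := by
    intro t
    rw [tendsto_iff_norm_sub_tendsto_zero]
    have h1 : Tendsto (fun k => ‖Y (φ k) 0 - y0‖ * exp (|t| / 4)) atTop (𝓝 0) := by
      have := (tendsto_iff_norm_sub_tendsto_zero.1 hlim).mul_const (exp (|t| / 4))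
      simpa using this
    refine squeeze_zero (fun k => norm_nonneg _) (fun k => ?_) h1
    have := h.traj_dist hw.adm (Y (φ k)) X (hY _) hX t
    rwa [hX0] at this
  have hfin : ∀ t, 0 ≤ t → ‖x t - X t‖ ≤ 2 * C * |ζ 0| * exp (-(3 / 4 * t)) := by
    intro t ht
    refine le_of_tendsto ((hlimt t).const_sub (x t)).norm ?_
    filter_upwards [hφ.tendsto_atTop.eventually_ge_atTop ⌈t⌉₊] with k hk
    exact hYb (φ k) t ht ((Nat.le_ceil t).trans (by exact_mod_cast hk))
  refine ⟨X, hX, fun t ht => ⟨?_, ?_⟩⟩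
  · have a1 := hfin t ht
    have a2 := hw.adm.lip (x t) (X t)
    have a3 := mul_le_mul_of_nonneg_left a1 hL0.le
    have a4 : 1 / (8 * C) * (2 * C * |ζ 0| * exp (-(3 / 4 * t))) =
      C * (1 / (8 * C)) * (2 * |ζ 0| * exp (-(3 / 4 * t))) := by ring
    rw [a4, c3] at a3
    have a5 := hζb t ht
    have a6 := abs_sub_le (z t) (w (x t)) (w (X t))
    have a7 : |z t - w (x t)| = |ζ t| := rfl
    have a8 : 0 ≤ exp (-(3 / 4 * t)) * |ζ 0| := by positivity
    change |z t - w (X t)| ≤ 2 * exp (-(3 / 4 * t)) * |ζ 0|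
    nlinarith
  · refine (hfin t ht).trans (le_of_eq ?_)
    change 2 * C * |ζ 0| * exp (-(3 / 4 * t)) = 2 * C * exp (-(3 / 4 * t)) * |ζ 0|
    ring

end SlowPhaseHelpers


section SlowPhaseHelpers
open Real Set Filter Topology MeasureTheory
open scoped NNReal BoundedContinuousFunction

theorem aux_uc {X F : Type*} [NormedAddCommGroup X] [ProperSpace X] [NormedAddCommGroup F]
    (f : X → F) (hf : Continuous f) (R : ℝ)
    (hR : ∀ p, ∃ k, Function.Periodic f k ∧ ‖p + k‖ ≤ R) : UniformContinuous f := by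
  have hK : UniformContinuousOn f (Metric.closedBall 0 (R + 1)) :=
    (isCompact_closedBall 0 (R + 1)).uniformContinuousOn_of_continuous hf.continuousOn
  rw [Metric.uniformContinuousOn_iff] at hK
  rw [Metric.uniformContinuous_iff]
  intro e he
  obtain ⟨δ, hδ, h⟩ := hK e he
  refine ⟨min δ 1, by positivity, fun {p q} hpq => ?_⟩
  obtain ⟨k, hk, hkR⟩ := hR p
  rw [← hk p, ← hk q]
  have h1 : dist (p + k) (q + k) = dist p q := by simp
  have h2 : dist p q < 1 := hpq.trans_le (min_le_right _ _)
  refine h _ ?_ _ ?_ (by rw [h1]; exact hpq.trans_le (min_le_left _ _))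
  · rw [mem_closedBall_zero_iff]; linarith
  · rw [mem_closedBall_zero_iff]
    have h3 : ‖q + k‖ ≤ ‖p + k‖ + ‖(p + k) - (q + k)‖ := by
      have := norm_sub_le (p + k) ((p + k) - (q + k))
      rwa [sub_sub_cancel] at this
    rw [← dist_eq_norm, h1] at h3
    linarith

/-- Periodicity in all four coordinates. -/
structure AuxPer {F : Type*} (f : ℝ × ℝ × ℝ × ℝ → F) : Prop where
  p1 : Function.Periodic f (2 * π, 0, 0, 0)
  p2 : Function.Periodic f (0, 2 * π, 0, 0)
  p3 : Function.Periodic f (0, 0, 2 * π, 0)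
  p4 : Function.Periodic f (0, 0, 0, 2 * π)

theorem aux_uc4 {F : Type*} [NormedAddCommGroup F] (f : ℝ × ℝ × ℝ × ℝ → F) (hf : Continuous f)
    (hp : AuxPer f) : UniformContinuous f := by
  refine aux_uc f hf (2 * π) fun p => ?_
  obtain ⟨a, b, c, d⟩ := p
  have key : ∀ a : ℝ, ∃ n : ℤ, |a + n * (2 * π)| ≤ 2 * π := by
    intro a
    have h2 : 0 < 2 * π := by positivity
    refine ⟨-⌊a / (2 * π)⌋, ?_⟩
    have h3 := Int.floor_le (a / (2 * π))
    have h4 := Int.lt_floor_add_one (a / (2 * π))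
    rw [le_div_iff₀ h2] at h3
    rw [div_lt_iff₀ h2] at h4
    push_cast
    rw [abs_le]
    constructor <;> linarith
  obtain ⟨n1, h1⟩ := key a
  obtain ⟨n2, h2⟩ := key b
  obtain ⟨n3, h3⟩ := key c
  obtain ⟨n4, h4⟩ := key d
  refine ⟨_, ((hp.p1.zsmul n1).add_period (hp.p2.zsmul n2)).add_period
    ((hp.p3.zsmul n3).add_period (hp.p4.zsmul n4)), ?_⟩
  simp only [Prod.smul_mk, Prod.mk_add_mk, smul_zero, add_zero, zero_add, zsmul_eq_mul]
  simp only [Prod.norm_mk, Real.norm_eq_abs]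
  exact max_le h1 (max_le h2 (max_le h3 h4))

theorem aux_uc_fderiv (f : ℝ × ℝ × ℝ × ℝ → ℝ) (hf : ContDiff ℝ 1 f) (hp : AuxPer f) :
    UniformContinuous (fderiv ℝ f) := by
  have key : ∀ k, Function.Periodic f k → Function.Periodic (fderiv ℝ f) k := by
    intro k hk p
    rw [← fderiv_comp_add_right]
    congr 1
    exact funext hk
  exact aux_uc4 _ (hf.continuous_fderiv one_ne_zero)
    ⟨key _ hp.p1, key _ hp.p2, key _ hp.p3, key _ hp.p4⟩

/-- Periodic perturbation terms with a bound on value and derivative. -/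
structure AuxGood (F : ℝ × ℝ × ℝ × ℝ → ℝ) (q : ℝ) : Prop where
  c1 : ContDiff ℝ 1 F
  per : AuxPer F
  bd : ∀ p, |F p| ≤ q
  fd : ∀ p v, |fderiv ℝ F p v| ≤ q * ‖v‖

/-- Perturbation terms of the slow phase system. -/
def auxF (S1 : ℝ × ℝ × ℝ → ℝ) (S2 S3 : ℝ × ℝ × ℝ × ℝ × ℝ × ℝ → ℝ) (ϑ c1 c2 c3 μ ε : ℝ)
    (p : ℝ × ℝ × ℝ × ℝ) : ℝ :=
  c1 * S1 (ϑ + p.1, p.2.2.1, μ) + c2 * S2 (ϑ + p.1, p.2.1, p.2.2.1, p.2.2.2, μ, ε)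
    + c3 * S3 (ϑ + p.1, p.2.1, p.2.2.1, p.2.2.2, μ, ε)

theorem aux_good_comp {Y : Type*} [NormedAddCommGroup Y] [NormedSpace ℝ Y]
    (S : Y → ℝ) (M : ℝ) (hS : ContDiff ℝ 1 S) (hb : BddWithDeriv S M)
    (A : ℝ × ℝ × ℝ × ℝ → Y) (B : ℝ × ℝ × ℝ × ℝ →L[ℝ] Y) (hA : ∀ p, HasFDerivAt A B p)
    (hB : ∀ v, ‖B v‖ ≤ ‖v‖) (hAc : ContDiff ℝ 1 A) (hper : AuxPer fun p => S (A p)) :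
    AuxGood (fun p => S (A p)) M := by
  refine ⟨hS.comp hAc, hper, fun p => (hb _).1, fun p v => ?_⟩
  have h1 : HasFDerivAt (fun p => S (A p)) ((fderiv ℝ S (A p)).comp B) p :=
    ((hS.differentiable one_ne_zero (A p)).hasFDerivAt).comp p (hA p)
  rw [h1.fderiv, ContinuousLinearMap.comp_apply]
  have h2 := (fderiv ℝ S (A p)).le_opNorm (B v)
  rw [Real.norm_eq_abs] at h2
  refine h2.trans ?_
  exact mul_le_mul (hb _).2 (hB v) (norm_nonneg _) ((abs_nonneg _).trans (hb (A p)).1)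

theorem AuxGood.smul {F : ℝ × ℝ × ℝ × ℝ → ℝ} {q : ℝ} (h : AuxGood F q) (c : ℝ) (hc : 0 ≤ c) :
    AuxGood (fun p => c * F p) (c * q) := by
  refine ⟨contDiff_const.mul h.c1, ⟨?_, ?_, ?_, ?_⟩, fun p => ?_, fun p v => ?_⟩
  · intro p; simp only [h.per.p1 p]
  · intro p; simp only [h.per.p2 p]
  · intro p; simp only [h.per.p3 p]
  · intro p; simp only [h.per.p4 p]
  · rw [abs_mul, abs_of_nonneg hc]; exact mul_le_mul_of_nonneg_left (h.bd p) hc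
  · rw [fderiv_const_mul (h.c1.differentiable one_ne_zero p)]
    rw [_root_.smul_apply, smul_eq_mul, abs_mul, abs_of_nonneg hc, mul_assoc]
    exact mul_le_mul_of_nonneg_left (h.fd p v) hc

theorem AuxGood.add {F F' : ℝ × ℝ × ℝ × ℝ → ℝ} {q q' : ℝ} (h : AuxGood F q) (h' : AuxGood F' q') :
    AuxGood (fun p => F p + F' p) (q + q') := by
  refine ⟨h.c1.add h'.c1, ⟨?_, ?_, ?_, ?_⟩, fun p => ?_, fun p v => ?_⟩
  · intro p; simp only [h.per.p1 p, h'.per.p1 p]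
  · intro p; simp only [h.per.p2 p, h'.per.p2 p]
  · intro p; simp only [h.per.p3 p, h'.per.p3 p]
  · intro p; simp only [h.per.p4 p, h'.per.p4 p]
  · exact (abs_add_le _ _).trans (add_le_add (h.bd p) (h'.bd p))
  · rw [fderiv_fun_add (h.c1.differentiable one_ne_zero p) (h'.c1.differentiable one_ne_zero p)]
    rw [_root_.add_apply, add_mul]
    exact (abs_add_le _ _).trans (add_le_add (h.fd p v) (h'.fd p v))

theorem aux_good3 (S : ℝ × ℝ × ℝ → ℝ) (M : ℝ)
    (hS : ContDiff ℝ 1 S ∧ Per2of3 S ∧ BddWithDeriv S M) (ϑ μ : ℝ) :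
    AuxGood (fun p => S (ϑ + p.1, p.2.2.1, μ)) M := by
  let B : ℝ × ℝ × ℝ × ℝ →L[ℝ] ℝ × ℝ × ℝ :=
    (ContinuousLinearMap.fst ℝ ℝ (ℝ × ℝ × ℝ)).prod
      ((((ContinuousLinearMap.fst ℝ ℝ ℝ).comp (ContinuousLinearMap.snd ℝ ℝ (ℝ × ℝ))).comp
        (ContinuousLinearMap.snd ℝ ℝ (ℝ × ℝ × ℝ))).prod 0)
  refine aux_good_comp S M hS.1 hS.2.2 (fun p => (ϑ + p.1, p.2.2.1, μ)) B (fun p => ?_)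
    (fun v => ?_) (by fun_prop) ⟨?_, ?_, ?_, ?_⟩
  · have : (fun p : ℝ × ℝ × ℝ × ℝ => (ϑ + p.1, p.2.2.1, μ)) = fun p => (ϑ, 0, μ) + B p := by
      funext p; simp [B]
    rw [this]
    exact B.hasFDerivAt.const_add _
  · obtain ⟨a, b, c, d⟩ := v
    change ‖(a, c, (0:ℝ))‖ ≤ _
    simp only [Prod.norm_mk, norm_zero]
    exact max_le (le_max_left _ _) (max_le (le_max_of_le_right
      (le_max_of_le_right (le_max_left _ _))) (le_max_of_le_left (norm_nonneg a)))
  · rintro ⟨a, b, c, d⟩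
    have := (hS.2.1 (ϑ + a) c μ).1
    simpa [add_assoc] using this
  · rintro ⟨a, b, c, d⟩
    simp
  · rintro ⟨a, b, c, d⟩
    have := (hS.2.1 (ϑ + a) c μ).2
    simpa [add_assoc] using this
  · rintro ⟨a, b, c, d⟩
    simp

theorem aux_good6 (S : ℝ × ℝ × ℝ × ℝ × ℝ × ℝ → ℝ) (M : ℝ)
    (hS : ContDiff ℝ 1 S ∧ Per4of6 S ∧ BddWithDeriv S M) (ϑ μ ε : ℝ) :
    AuxGood (fun p => S (ϑ + p.1, p.2.1, p.2.2.1, p.2.2.2, μ, ε)) M := by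
  let c2 := (ContinuousLinearMap.snd ℝ ℝ (ℝ × ℝ × ℝ))
  let c3 := (ContinuousLinearMap.snd ℝ ℝ (ℝ × ℝ)).comp c2
  let B : ℝ × ℝ × ℝ × ℝ →L[ℝ] ℝ × ℝ × ℝ × ℝ × ℝ × ℝ :=
    (ContinuousLinearMap.fst ℝ ℝ (ℝ × ℝ × ℝ)).prod
      (((ContinuousLinearMap.fst ℝ ℝ (ℝ × ℝ)).comp c2).prod
        (((ContinuousLinearMap.fst ℝ ℝ ℝ).comp c3).prod
          (((ContinuousLinearMap.snd ℝ ℝ ℝ).comp c3).prod (ContinuousLinearMap.prod 0 0))))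
  refine aux_good_comp S M hS.1 hS.2.2 (fun p => (ϑ + p.1, p.2.1, p.2.2.1, p.2.2.2, μ, ε)) B
    (fun p => ?_) (fun v => ?_) (by fun_prop) ⟨?_, ?_, ?_, ?_⟩
  · have : (fun p : ℝ × ℝ × ℝ × ℝ => (ϑ + p.1, p.2.1, p.2.2.1, p.2.2.2, μ, ε)) =
        fun p => (ϑ, 0, 0, 0, μ, ε) + B p := by
      funext p; simp [B, c2, c3]
    rw [this]
    exact B.hasFDerivAt.const_add _
  · obtain ⟨a, b, c, d⟩ := v
    change ‖(a, b, c, d, (0:ℝ), (0:ℝ))‖ ≤ _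
    simp [Prod.norm_mk]
  · rintro ⟨a, b, c, d⟩
    have := (hS.2.1 (ϑ + a) b c d μ ε).1
    simpa [add_assoc] using this
  · rintro ⟨a, b, c, d⟩
    have := (hS.2.1 (ϑ + a) b c d μ ε).2.1
    simpa [add_assoc] using this
  · rintro ⟨a, b, c, d⟩
    have := (hS.2.1 (ϑ + a) b c d μ ε).2.2.1
    simpa [add_assoc] using this
  · rintro ⟨a, b, c, d⟩
    have := (hS.2.1 (ϑ + a) b c d μ ε).2.2.2
    simpa [add_assoc] using this

theorem aux_goodF (S1 : ℝ × ℝ × ℝ → ℝ) (S2 S3 : ℝ × ℝ × ℝ × ℝ × ℝ × ℝ → ℝ) (M : ℝ)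
    (hS1 : ContDiff ℝ 1 S1 ∧ Per2of3 S1 ∧ BddWithDeriv S1 M)
    (hS2 : ContDiff ℝ 1 S2 ∧ Per4of6 S2 ∧ BddWithDeriv S2 M)
    (hS3 : ContDiff ℝ 1 S3 ∧ Per4of6 S3 ∧ BddWithDeriv S3 M) (ϑ c1 c2 c3 μ ε : ℝ)
    (h1 : 0 ≤ c1) (h2 : 0 ≤ c2) (h3 : 0 ≤ c3) :
    AuxGood (auxF S1 S2 S3 ϑ c1 c2 c3 μ ε) (c1 * M + c2 * M + c3 * M) :=
  (((aux_good3 S1 M hS1 ϑ μ).smul c1 h1).add ((aux_good6 S2 M hS2 ϑ μ ε).smul c2 h2)).add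
    ((aux_good6 S3 M hS3 ϑ μ ε).smul c3 h3)

/-- Nonlinearity of the scaled radial equation. -/
noncomputable def auxN (G : ℝ → ℝ) (Δ g ϑ : ℝ) (F : ℝ × ℝ × ℝ × ℝ → ℝ)
    (p : ℝ × ℝ × ℝ × ℝ) : ℝ :=
  p.1 + (-Δ + G (ϑ + p.1) + F p) / (-g)

/-- Vector field of the scaled angular equations. -/
noncomputable def auxV (Sb : ℝ → ℝ) (g ϑ b0 b1 b2 : ℝ) (F : ℝ × ℝ × ℝ × ℝ → ℝ)
    (p : ℝ × ℝ × ℝ × ℝ) : ℝ × ℝ × ℝ :=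
  ((b0 + Sb (ϑ + p.1) + F p) / (-g), b1, b2)

theorem aux_sys (G Sb : ℝ → ℝ) (Δ g ϑ b0 b1 b2 MS C ρ q : ℝ) (F F' : ℝ × ℝ × ℝ × ℝ → ℝ)
    (hG : ContDiff ℝ 1 G) (hGp : Function.Periodic G (2 * π)) (hGΔ : G ϑ = Δ)
    (hSb : ContDiff ℝ 1 Sb) (hSbp : Function.Periodic Sb (2 * π)) (hSbd : BddWithDeriv Sb MS)
    (hg : g ≠ 0) (hC : C = MS / |g| + 1) (hρ : 0 < ρ)
    (hGρ : ∀ z, |z| ≤ ρ → |1 - deriv G (ϑ + z) / g| ≤ 1 / (128 * C))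
    (hF : AuxGood F q) (hF' : AuxGood F' q) (hq1 : q / |g| ≤ 1 / (128 * C))
    (hq2 : q / |g| ≤ ρ / 2) :
    AuxSys (auxN G Δ g ϑ F) (auxV Sb g ϑ b0 b1 b2 F') C ρ := by
  have hg0 : 0 < |g| := abs_pos.2 hg
  have hMS : 0 ≤ MS := (abs_nonneg _).trans (hSbd 0).1
  have hC1 : 1 ≤ C := by rw [hC]; have : 0 ≤ MS / |g| := by positivity
                         linarith
  have hC0 : 0 < C := by linarith
  have hη : 1 / (64 * C) = 2 * (1 / (128 * C)) := by field_simp; norm_num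
  have hη1 : 1 / (128 * C) ≤ 1 / 128 := by
    apply one_div_le_one_div_of_le (by norm_num); linarith
  have hη0 : 0 < 1 / (128 * C) := by positivity
  have hqF : ∀ (H : ℝ × ℝ × ℝ × ℝ → ℝ), AuxGood H q → ∀ p a v,
      |fderiv ℝ H p (a, v) / g| ≤ 1 / (128 * C) * (|a| + ‖v‖) := by
    intro H hH p a v
    rw [abs_div, div_le_iff₀ hg0]
    rw [div_le_iff₀ hg0] at hq1
    have h1 := hH.fd p (a, v)
    have h2 : ‖(a, v)‖ ≤ |a| + ‖v‖ := by
      rw [Prod.norm_mk, Real.norm_eq_abs]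
      exact max_le (by linarith [norm_nonneg v]) (by linarith [abs_nonneg a])
    have h3 := mul_le_mul_of_nonneg_right hq1 (norm_nonneg (a, v))
    have h4 := mul_le_mul_of_nonneg_left h2 (mul_pos hη0 hg0).le
    linarith
  -- the periodic parts
  have hc1 : ContDiff ℝ 1 fun p : ℝ × ℝ × ℝ × ℝ => (-Δ + G (ϑ + p.1) + F p) / (-g) := by
    have := hF.c1
    fun_prop
  have hp1 : AuxPer fun p : ℝ × ℝ × ℝ × ℝ => (-Δ + G (ϑ + p.1) + F p) / (-g) := by
    refine ⟨?_, ?_, ?_, ?_⟩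
    · intro p; simp only [hF.per.p1 p, Prod.fst_add, ← add_assoc, hGp (ϑ + p.1)]
    · intro p; simp only [hF.per.p2 p, Prod.fst_add, add_zero]
    · intro p; simp only [hF.per.p3 p, Prod.fst_add, add_zero]
    · intro p; simp only [hF.per.p4 p, Prod.fst_add, add_zero]
  have hc2 : ContDiff ℝ 1 fun p : ℝ × ℝ × ℝ × ℝ => (b0 + Sb (ϑ + p.1) + F' p) / (-g) := by
    have := hF'.c1
    fun_prop
  have hp2 : AuxPer fun p : ℝ × ℝ × ℝ × ℝ => (b0 + Sb (ϑ + p.1) + F' p) / (-g) := by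
    refine ⟨?_, ?_, ?_, ?_⟩
    · intro p; simp only [hF'.per.p1 p, Prod.fst_add, ← add_assoc, hSbp (ϑ + p.1)]
    · intro p; simp only [hF'.per.p2 p, Prod.fst_add, add_zero]
    · intro p; simp only [hF'.per.p3 p, Prod.fst_add, add_zero]
    · intro p; simp only [hF'.per.p4 p, Prod.fst_add, add_zero]
  set N₁ := fun p : ℝ × ℝ × ℝ × ℝ => (-Δ + G (ϑ + p.1) + F p) / (-g) with hN₁
  set V₁ := fun p : ℝ × ℝ × ℝ × ℝ => (b0 + Sb (ϑ + p.1) + F' p) / (-g) with hV₁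
  have hfst : ∀ p : ℝ × ℝ × ℝ × ℝ, HasFDerivAt (fun p : ℝ × ℝ × ℝ × ℝ => ϑ + p.1)
      (ContinuousLinearMap.fst ℝ ℝ (ℝ × ℝ × ℝ)) p := fun p => hasFDerivAt_fst.const_add ϑ
  have hcomp : ∀ (H : ℝ → ℝ), ContDiff ℝ 1 H → ∀ p : ℝ × ℝ × ℝ × ℝ,
      HasFDerivAt (fun p : ℝ × ℝ × ℝ × ℝ => H (ϑ + p.1))
        (deriv H (ϑ + p.1) • ContinuousLinearMap.fst ℝ ℝ (ℝ × ℝ × ℝ)) p := fun H hH p =>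
    (hH.differentiable one_ne_zero (ϑ + p.1)).hasDerivAt.comp_hasFDerivAt p (hfst p)
  have hdF : ∀ (H : ℝ × ℝ × ℝ × ℝ → ℝ), AuxGood H q → ∀ p, HasFDerivAt H (fderiv ℝ H p) p :=
    fun H hH p => (hH.c1.differentiable one_ne_zero p).hasFDerivAt
  have hdN₁ : ∀ p v, fderiv ℝ N₁ p v = (deriv G (ϑ + p.1) * v.1 + fderiv ℝ F p v) / (-g) := by
    intro p v
    have := (((hcomp G hG p).const_add (-Δ)).add (hdF F hF p)).mul_const ((-g)⁻¹)
    have h2 := this.congr_of_eventuallyEq (f₁ := N₁)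
      (Eventually.of_forall fun p => by simp [hN₁, div_eq_mul_inv])
    rw [h2.fderiv]
    simp [div_eq_mul_inv]
    ring
  have hdV₁ : ∀ p v, fderiv ℝ V₁ p v = (deriv Sb (ϑ + p.1) * v.1 + fderiv ℝ F' p v) / (-g) := by
    intro p v
    have := (((hcomp Sb hSb p).const_add b0).add (hdF F' hF' p)).mul_const ((-g)⁻¹)
    have h2 := this.congr_of_eventuallyEq (f₁ := V₁)
      (Eventually.of_forall fun p => by simp [hV₁, div_eq_mul_inv])
    rw [h2.fderiv]
    simp [div_eq_mul_inv]
    ring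
  have hNf : ∀ p, HasFDerivAt (auxN G Δ g ϑ F)
      (ContinuousLinearMap.fst ℝ ℝ (ℝ × ℝ × ℝ) + fderiv ℝ N₁ p) p := fun p =>
    ((ContinuousLinearMap.fst ℝ ℝ (ℝ × ℝ × ℝ)).hasFDerivAt (x := p)).add
      (hc1.differentiable one_ne_zero p).hasFDerivAt
  have hVf : ∀ p, HasFDerivAt (auxV Sb g ϑ b0 b1 b2 F')
      ((ContinuousLinearMap.inl ℝ ℝ (ℝ × ℝ)).comp (fderiv ℝ V₁ p)) p := fun p => by
    have h1 := (hc2.differentiable one_ne_zero p).hasFDerivAt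
    have h2 := ((ContinuousLinearMap.inl ℝ ℝ (ℝ × ℝ)).hasFDerivAt.comp p h1).add_const (0, b1, b2)
    refine h2.congr_of_eventuallyEq (Eventually.of_forall fun p => ?_)
    simp [auxV, hV₁]
  have hNf' : fderiv ℝ (auxN G Δ g ϑ F) =
      fun p => ContinuousLinearMap.fst ℝ ℝ (ℝ × ℝ × ℝ) + fderiv ℝ N₁ p :=
    funext fun p => (hNf p).fderiv
  have hVf' : fderiv ℝ (auxV Sb g ϑ b0 b1 b2 F') =
      fun p => (ContinuousLinearMap.inl ℝ ℝ (ℝ × ℝ)).comp (fderiv ℝ V₁ p) :=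
    funext fun p => (hVf p).fderiv
  refine ⟨hC1, hρ, contDiff_fst.add hc1, hc2.prodMk contDiff_const, ?_, ?_, ?_, ?_, ?_⟩
  · rw [hNf']
    exact uniformContinuous_const.add (aux_uc_fderiv N₁ hc1 hp1)
  · rw [hVf']
    exact ((ContinuousLinearMap.compL ℝ (ℝ × ℝ × ℝ × ℝ) ℝ (ℝ × ℝ × ℝ))
      (ContinuousLinearMap.inl ℝ ℝ (ℝ × ℝ))).uniformContinuous.comp (aux_uc_fderiv V₁ hc2 hp2)
  · intro z x a v hz
    rw [hNf', hη]
    simp only [_root_.add_apply, ContinuousLinearMap.coe_fst', hdN₁]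
    have h1 := hqF F hF (z, x) a v
    have h2 := mul_le_mul_of_nonneg_right (hGρ z hz) (abs_nonneg a)
    rw [← abs_mul] at h2
    have h3 : a + (deriv G (ϑ + z) * a + fderiv ℝ F (z, x) (a, v)) / (-g) =
      (1 - deriv G (ϑ + z) / g) * a - fderiv ℝ F (z, x) (a, v) / g := by
      field_simp; ring
    rw [h3]
    refine (abs_sub _ _).trans ?_
    nlinarith [norm_nonneg v, mul_nonneg hη0.le (norm_nonneg v)]
  · intro z x a v hz
    rw [hVf', hη]
    simp only [ContinuousLinearMap.comp_apply, hdV₁]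
    have h1 := hqF F' hF' (z, x) a v
    have h2 : |deriv Sb (ϑ + z) * a / g| ≤ MS / |g| * |a| := by
      rw [abs_div, abs_mul, div_mul_eq_mul_div]
      have h4 := (hSbd (ϑ + z)).2
      rw [← norm_deriv_eq_norm_fderiv, Real.norm_eq_abs] at h4
      gcongr
    have h3 : (deriv Sb (ϑ + z) * a + fderiv ℝ F' (z, x) (a, v)) / (-g) =
      -(deriv Sb (ϑ + z) * a / g + fderiv ℝ F' (z, x) (a, v) / g) := by
      field_simp
    have h5 : ‖(ContinuousLinearMap.inl ℝ ℝ (ℝ × ℝ))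
        ((deriv Sb (ϑ + z) * a + fderiv ℝ F' (z, x) (a, v)) / (-g))‖ =
        |(deriv Sb (ϑ + z) * a + fderiv ℝ F' (z, x) (a, v)) / (-g)| := by
      rw [ContinuousLinearMap.inl_apply, Prod.norm_mk, norm_zero, Real.norm_eq_abs,
        max_eq_left (abs_nonneg _)]
    refine (le_of_eq h5).trans ?_
    rw [h3, abs_neg]
    refine (abs_add_le _ _).trans ?_
    rw [hC] at h1 hη1 hη0 ⊢
    nlinarith [norm_nonneg v, mul_nonneg hη0.le (norm_nonneg v), abs_nonneg a]
  · intro x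
    have h1 : auxN G Δ g ϑ F (0, x) = F (0, x) / (-g) := by
      simp [auxN, hGΔ]
    rw [h1, abs_div, abs_neg]
    refine le_trans ?_ hq2
    exact div_le_div_of_nonneg_right (hF.bd _) hg0.le

end SlowPhaseHelpers


section SlowPhaseHelpers
open Real Set Filter Topology MeasureTheory
open scoped NNReal BoundedContinuousFunction

theorem aux_manifold {N : ℝ × ℝ × ℝ × ℝ → ℝ} {V : ℝ × ℝ × ℝ × ℝ → ℝ × ℝ × ℝ} {C ρ : ℝ}
    {w : ℝ × ℝ × ℝ → ℝ} (hw : AuxMan N V C ρ w)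
    (σ α β ϑ0 : ℝ) (hσ : σ ≠ 0) (Rψ Rφ : ℝ → ℝ → ℝ → ℝ)
    (hψ : ∀ z φ t, Rψ (ϑ0 + z) φ t = σ * (-z + N (z, φ, β * t, α * t)))
    (hφ : ∀ z φ t, Rφ (ϑ0 + z) φ t = σ * (V (z, φ, β * t, α * t)).1)
    (hV2 : ∀ p, (V p).2 = (β / σ, α / σ)) (φf : ℝ → ℝ)
    (hf : ∀ t, HasDerivAt φf (Rφ (ϑ0 + w (φf t, β * t, α * t)) (φf t) t) t) (t : ℝ) :
    HasDerivAt (fun s => ϑ0 + w (φf s, β * s, α * s))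
      (Rψ (ϑ0 + w (φf t, β * t, α * t)) (φf t) t) t := by
  have h1 : HasDerivAt (fun s => (φf s, β * s, α * s))
      (σ • V (w (φf t, β * t, α * t), φf t, β * t, α * t)) t := by
    have a1 := hf t
    rw [hφ] at a1
    have a2 : HasDerivAt (fun s => β * s) β t := by simpa using (hasDerivAt_id t).const_mul β
    have a3 : HasDerivAt (fun s => α * s) α t := by simpa using (hasDerivAt_id t).const_mul α
    refine (a1.prodMk (a2.prodMk a3)).congr_deriv ?_
    ext
    · simp
    · change β = σ * (V _).2.1
      rw [hV2]; field_simp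
    · change α = σ * (V _).2.2
      rw [hV2]; field_simp
  refine ((hw.hasDerivAt h1).const_add ϑ0).congr_deriv ?_
  rw [map_smul, hw.pde, hψ, smul_eq_mul]

theorem aux_stability {N : ℝ × ℝ × ℝ × ℝ → ℝ} {V : ℝ × ℝ × ℝ × ℝ → ℝ × ℝ × ℝ} {C ρ : ℝ}
    (h : AuxSys N V C ρ) {w : ℝ × ℝ × ℝ → ℝ} (hw : AuxMan N V C ρ w)
    (σ α β ϑ0 : ℝ) (hσ : σ ≠ 0) (Rψ Rφ : ℝ → ℝ → ℝ → ℝ)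
    (hψ : ∀ z φ t, Rψ (ϑ0 + z) φ t = σ * (-z + N (z, φ, β * t, α * t)))
    (hφ : ∀ z φ t, Rφ (ϑ0 + z) φ t = σ * (V (z, φ, β * t, α * t)).1)
    (hV2 : ∀ p, (V p).2 = (β / σ, α / σ)) (ψf φf : ℝ → ℝ) (t₀ : ℝ)
    (h1 : ∀ t, HasDerivAt ψf (Rψ (ψf t) (φf t) t) t)
    (h2 : ∀ t, HasDerivAt φf (Rφ (ψf t) (φf t) t) t) (h0 : |ψf t₀ - ϑ0| ≤ ρ) :
    ∃ φb : ℝ → ℝ, (∀ t, HasDerivAt φb (Rφ (ϑ0 + w (φb t, β * t, α * t)) (φb t) t) t) ∧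
      ∀ t, 0 ≤ σ * (t - t₀) →
        |ψf t - (ϑ0 + w (φb t, β * t, α * t))| + |φf t - φb t| ≤
          (2 + 2 * C) * exp (-(3 / 4 * (σ * (t - t₀)))) *
            (|ψf t₀ - (ϑ0 + w (φb t₀, β * t₀, α * t₀))| + |φf t₀ - φb t₀|) := by
  obtain ⟨c0, c1, c2, c3, c4, c5⟩ := h.small
  have hL : 1 / (8 * C) ≤ 1 / 8 := by rw [c4]; linarith
  let T : ℝ → ℝ := fun τ => t₀ + τ / σ
  have hT : ∀ τ, HasDerivAt T σ⁻¹ τ := fun τ => by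
    have := ((hasDerivAt_id τ).div_const σ).const_add t₀
    simpa [T] using this
  let z : ℝ → ℝ := fun τ => ψf (T τ) - ϑ0
  let x : ℝ → ℝ × ℝ × ℝ := fun τ => (φf (T τ), β * T τ, α * T τ)
  have hz : ∀ τ, HasDerivAt z (-z τ + N (z τ, x τ)) τ := by
    intro τ
    have a1 := ((h1 (T τ)).comp τ (hT τ)).sub_const ϑ0
    refine a1.congr_deriv ?_
    have a2 := hψ (z τ) (φf (T τ)) (T τ)
    rw [show ϑ0 + z τ = ψf (T τ) by simp [z]] at a2
    rw [a2]
    simp only [x]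
    field_simp
  have hx : ∀ τ, HasDerivAt x (V (z τ, x τ)) τ := by
    intro τ
    have a1 := (h2 (T τ)).comp τ (hT τ)
    have a2 := hφ (z τ) (φf (T τ)) (T τ)
    rw [show ϑ0 + z τ = ψf (T τ) by simp [z]] at a2
    rw [a2] at a1
    refine (a1.prodMk (((hT τ).const_mul β).prodMk ((hT τ).const_mul α))).congr_deriv ?_
    ext
    · simp only [x]; field_simp
    · simp only [hV2]; rw [div_eq_mul_inv]
    · simp only [hV2]; rw [div_eq_mul_inv]
  have hT0 : T 0 = t₀ := by simp [T]
  obtain ⟨Y, hY, hb⟩ := h.phase hw z x hz hx (by simpa only [z, hT0] using h0)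
  -- the angle components agree
  have hY2 : ∀ τ, (Y τ).2 = (β * T τ, α * T τ) := by
    have hsnd : ∀ (F : ℝ → ℝ × ℝ × ℝ) F' τ, HasDerivAt F F' τ →
        HasDerivAt (fun s => (F s).2) F'.2 τ := fun F F' τ hF =>
      (ContinuousLinearMap.snd ℝ ℝ (ℝ × ℝ)).hasFDerivAt.comp_hasDerivAt τ hF
    have hd : ∀ τ, HasDerivAt (fun s => (x s).2 - (Y s).2) 0 τ := fun τ => by
      refine ((hsnd x _ τ (hx τ)).sub (hsnd Y _ τ (hY τ))).congr_deriv ?_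
      rw [hV2, hV2, sub_self]
    have hconst : ∀ a b, (x a).2 - (Y a).2 = (x b).2 - (Y b).2 := fun a b =>
      is_const_of_deriv_eq_zero (fun τ => (hd τ).differentiableAt) (fun τ => (hd τ).deriv) a b
    have hlim : Tendsto (fun τ : ℝ => 2 * C * exp (-(3 / 4 * τ)) * |z 0 - w (x 0)|) atTop (𝓝 0) := by
      have a1 : Tendsto (fun τ : ℝ => exp (-(3 / 4 * τ))) atTop (𝓝 0) :=
        tendsto_exp_neg_atTop_nhds_zero.comp
          (tendsto_id.const_mul_atTop (by norm_num : (0:ℝ) < 3 / 4))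
      have := (a1.const_mul (2 * C)).mul_const |z 0 - w (x 0)|
      simpa using this
    intro τ
    have hzero : ‖(x τ).2 - (Y τ).2‖ ≤ 0 := by
      refine ge_of_tendsto hlim ?_
      filter_upwards [eventually_ge_atTop 0] with s hs
      rw [hconst τ s]
      exact (norm_snd_le (x s - Y s)).trans (hb s hs).2
    have := sub_eq_zero.1 (norm_le_zero_iff.1 hzero)
    exact this.symm
  have hYT : ∀ t, Y (σ * (t - t₀)) = ((Y (σ * (t - t₀))).1, β * t, α * t) := by
    intro t
    have a1 : T (σ * (t - t₀)) = t := by simp only [T]; field_simp; ring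
    have a2 := hY2 (σ * (t - t₀))
    rw [a1] at a2
    rw [← a2]
  have hxT : ∀ t, x (σ * (t - t₀)) = (φf t, β * t, α * t) := by
    intro t
    have a1 : T (σ * (t - t₀)) = t := by simp only [T]; field_simp; ring
    simp only [x, a1]
  have hzT : ∀ t, z (σ * (t - t₀)) = ψf t - ϑ0 := by
    intro t
    have a1 : T (σ * (t - t₀)) = t := by simp only [T]; field_simp; ring
    simp only [z, a1]
  refine ⟨fun t => (Y (σ * (t - t₀))).1, fun t => ?_, fun t ht => ?_⟩
  · have a1 : HasDerivAt (fun t => σ * (t - t₀)) σ t := by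
      simpa using ((hasDerivAt_id t).sub_const t₀).const_mul σ
    have a2 := (hY (σ * (t - t₀))).scomp t a1
    have a3 := (ContinuousLinearMap.fst ℝ ℝ (ℝ × ℝ)).hasFDerivAt.comp_hasDerivAt t a2
    refine a3.congr_deriv ?_
    rw [hφ]
    beta_reduce
    rw [← hYT t]
    rfl
  · beta_reduce
    rw [← hYT t, ← hYT t₀]
    obtain ⟨b1, b2⟩ := hb _ ht
    rw [hzT] at b1
    have e1 : |ψf t - (ϑ0 + w (Y (σ * (t - t₀))))| = |ψf t - ϑ0 - w (Y (σ * (t - t₀)))| := by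
      rw [sub_sub]
    have e2 : |φf t - (Y (σ * (t - t₀))).1| ≤ ‖x (σ * (t - t₀)) - Y (σ * (t - t₀))‖ := by
      have := norm_fst_le (x (σ * (t - t₀)) - Y (σ * (t - t₀)))
      rwa [hxT] at this ⊢
    have e3 : ‖x (σ * (t₀ - t₀)) - Y (σ * (t₀ - t₀))‖ = |φf t₀ - (Y (σ * (t₀ - t₀))).1| := by
      rw [hxT, hYT t₀, Prod.mk_sub_mk, Prod.mk_sub_mk, sub_self, sub_self, Prod.norm_mk]
      simp
    have e4 : |ψf t₀ - (ϑ0 + w (Y (σ * (t₀ - t₀))))| = |z 0 - w (Y (σ * (t₀ - t₀)))| := by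
      have := hzT t₀
      rw [sub_self, mul_zero] at this
      rw [sub_self, mul_zero, this, sub_sub]
    rw [e1, ← e3, e4]
    rw [sub_self, mul_zero]
    have e5 : |z 0 - w (x 0)| ≤ |z 0 - w (Y 0)| + ‖x 0 - Y 0‖ := by
      have a1 := abs_sub_le (z 0) (w (Y 0)) (w (x 0))
      have a2 := hw.adm.lip (Y 0) (x 0)
      rw [norm_sub_rev] at a2
      nlinarith [norm_nonneg (x 0 - Y 0)]
    have e6 : 0 ≤ (2 + 2 * C) * exp (-(3 / 4 * (σ * (t - t₀)))) := by positivity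
    have e7 := mul_le_mul_of_nonneg_left e5 e6
    linarith

end SlowPhaseHelpers


section SlowPhaseHelpers
open Real Set Filter Topology MeasureTheory
open scoped NNReal BoundedContinuousFunction

theorem auxF_sub (S1 : ℝ × ℝ × ℝ → ℝ) (S2 S3 : ℝ × ℝ × ℝ × ℝ × ℝ × ℝ → ℝ) (M : ℝ)
    (hS2 : BddWithDeriv S2 M) (hS3 : BddWithDeriv S3 M) (ϑ c1 c2 c3 μ ε g : ℝ)
    (h2 : 0 ≤ c2) (h3 : 0 ≤ c3) (p : ℝ × ℝ × ℝ × ℝ) :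
    |(auxF S1 S2 S3 ϑ c1 c2 c3 μ ε p - auxF S1 S2 S3 ϑ c1 0 0 μ ε p) / (-g)| ≤
      (c2 + c3) * M / |g| := by
  rw [abs_div, abs_neg]
  refine div_le_div_of_nonneg_right ?_ (abs_nonneg g)
  have e : auxF S1 S2 S3 ϑ c1 c2 c3 μ ε p - auxF S1 S2 S3 ϑ c1 0 0 μ ε p =
      c2 * S2 (ϑ + p.1, p.2.1, p.2.2.1, p.2.2.2, μ, ε)
        + c3 * S3 (ϑ + p.1, p.2.1, p.2.2.1, p.2.2.2, μ, ε) := by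
    simp only [auxF]; ring
  rw [e]
  refine (abs_add_le _ _).trans ?_
  rw [abs_mul, abs_mul, abs_of_nonneg h2, abs_of_nonneg h3, add_mul]
  exact add_le_add (mul_le_mul_of_nonneg_left (hS2 _).1 h2)
    (mul_le_mul_of_nonneg_left (hS3 _).1 h3)

theorem auxN_periodic (G : ℝ → ℝ) (Δ g ϑ : ℝ) (F : ℝ × ℝ × ℝ × ℝ → ℝ) (k : ℝ × ℝ × ℝ)
    (hF : ∀ z x, F (z, x + k) = F (z, x)) (z : ℝ) (x : ℝ × ℝ × ℝ) :
    auxN G Δ g ϑ F (z, x + k) = auxN G Δ g ϑ F (z, x) := by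
  simp only [auxN, hF]

theorem auxV_periodic (Sb : ℝ → ℝ) (g ϑ b0 b1 b2 : ℝ) (F : ℝ × ℝ × ℝ × ℝ → ℝ) (k : ℝ × ℝ × ℝ)
    (hF : ∀ z x, F (z, x + k) = F (z, x)) (z : ℝ) (x : ℝ × ℝ × ℝ) :
    auxV Sb g ϑ b0 b1 b2 F (z, x + k) = auxV Sb g ϑ b0 b1 b2 F (z, x) := by
  simp only [auxV, hF]

theorem AuxPer.tail {F : ℝ × ℝ × ℝ × ℝ → ℝ} (k : ℝ × ℝ × ℝ)
    (h : Function.Periodic F (0, k)) (z : ℝ) (x : ℝ × ℝ × ℝ) :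
    F (z, x + k) = F (z, x) := by
  have := h (z, x)
  rwa [Prod.mk_add_mk, add_zero] at this

/-- The combined existence statement for one parameter value. -/
theorem aux_pair (G Sb : ℝ → ℝ) (Δ g ϑ b0 b1 b2 MS C ρ : ℝ)
    (hG : ContDiff ℝ 1 G) (hGp : Function.Periodic G (2 * π)) (hGΔ : G ϑ = Δ)
    (hSb : ContDiff ℝ 1 Sb ∧ Function.Periodic Sb (2 * π) ∧ BddWithDeriv Sb MS)
    (hg : g ≠ 0) (hC : C = MS / |g| + 1) (hρ : 0 < ρ)
    (hGρ : ∀ z, |z| ≤ ρ → |1 - deriv G (ϑ + z) / g| ≤ 1 / (128 * C))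
    (S11 S21 : ℝ × ℝ × ℝ → ℝ) (S12 S13 S22 S23 : ℝ × ℝ × ℝ × ℝ × ℝ × ℝ → ℝ)
    (hS11 : ContDiff ℝ 1 S11 ∧ Per2of3 S11 ∧ BddWithDeriv S11 MS)
    (hS21 : ContDiff ℝ 1 S21 ∧ Per2of3 S21 ∧ BddWithDeriv S21 MS)
    (hS12 : ContDiff ℝ 1 S12 ∧ Per4of6 S12 ∧ BddWithDeriv S12 MS)
    (hS13 : ContDiff ℝ 1 S13 ∧ Per4of6 S13 ∧ BddWithDeriv S13 MS)
    (hS22 : ContDiff ℝ 1 S22 ∧ Per4of6 S22 ∧ BddWithDeriv S22 MS)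
    (hS23 : ContDiff ℝ 1 S23 ∧ Per4of6 S23 ∧ BddWithDeriv S23 MS)
    (c1 c2 c3 μ ε : ℝ) (h1 : 0 ≤ c1) (h2 : 0 ≤ c2) (h3 : 0 ≤ c3)
    (hq1 : (c1 + c2 + c3) * (MS / |g|) ≤ 1 / (128 * C))
    (hq2 : (c1 + c2 + c3) * (MS / |g|) ≤ ρ / 2) :
    AuxSys (auxN G Δ g ϑ (auxF S11 S12 S13 ϑ c1 c2 c3 μ ε))
      (auxV Sb g ϑ b0 b1 b2 (auxF S21 S22 S23 ϑ c1 c2 c3 μ ε)) C ρ ∧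
    ∃ w w0 : ℝ × ℝ × ℝ → ℝ,
      AuxMan (auxN G Δ g ϑ (auxF S11 S12 S13 ϑ c1 c2 c3 μ ε))
        (auxV Sb g ϑ b0 b1 b2 (auxF S21 S22 S23 ϑ c1 c2 c3 μ ε)) C ρ w ∧
      ContDiff ℝ 1 w0 ∧
      (∀ x, w (x + (2 * π, 0, 0)) = w x) ∧ (∀ x, w (x + (0, 2 * π, 0)) = w x) ∧
      (∀ x, w (x + (0, 0, 2 * π)) = w x) ∧ (∀ x, w0 (x + (0, 2 * π, 0)) = w0 x) ∧
      (∀ a b c, w0 (a, b, c) = w0 (0, b, 0)) ∧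
      (∀ x, |w0 x| ≤ c1 * (6 * C)) ∧ (∀ x, |w x - w0 x| ≤ (c2 + c3) * (6 * C)) := by
  have hg0 : 0 < |g| := abs_pos.2 hg
  have hMS : 0 ≤ MS := (abs_nonneg _).trans (hSb.2.2 0).1
  have hMg : 0 ≤ MS / |g| := by positivity
  have gF := aux_goodF S11 S12 S13 MS hS11 hS12 hS13 ϑ c1 c2 c3 μ ε h1 h2 h3
  have gF' := aux_goodF S21 S22 S23 MS hS21 hS22 hS23 ϑ c1 c2 c3 μ ε h1 h2 h3
  have gF0 := aux_goodF S11 S12 S13 MS hS11 hS12 hS13 ϑ c1 0 0 μ ε h1 le_rfl le_rfl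
  have gF0' := aux_goodF S21 S22 S23 MS hS21 hS22 hS23 ϑ c1 0 0 μ ε h1 le_rfl le_rfl
  have e1 : (c1 * MS + c2 * MS + c3 * MS) / |g| = (c1 + c2 + c3) * (MS / |g|) := by ring
  have e2 : (c1 * MS + 0 * MS + 0 * MS) / |g| ≤ (c1 + c2 + c3) * (MS / |g|) := by
    have : (c1 * MS + 0 * MS + 0 * MS) / |g| = c1 * (MS / |g|) := by ring
    rw [this]
    nlinarith
  have sys := aux_sys G Sb Δ g ϑ b0 b1 b2 MS C ρ _ _ _ hG hGp hGΔ hSb.1 hSb.2.1 hSb.2.2 hg hC hρ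
    hGρ gF gF' (e1.le.trans hq1) (e1.le.trans hq2)
  have sys0 := aux_sys G Sb Δ g ϑ b0 b1 b2 MS C ρ _ _ _ hG hGp hGΔ hSb.1 hSb.2.1 hSb.2.2 hg hC hρ
    hGρ gF0 gF0' (e2.trans hq1) (e2.trans hq2)
  obtain ⟨w, hw⟩ := sys.exists_man
  obtain ⟨w0, hw0⟩ := sys0.exists_man
  have tr : ∀ k, Function.Periodic (auxF S11 S12 S13 ϑ c1 c2 c3 μ ε) (0, k) →
      Function.Periodic (auxF S21 S22 S23 ϑ c1 c2 c3 μ ε) (0, k) → ∀ x, w (x + k) = w x :=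
    fun k a b x => sys.translate hw k (auxN_periodic G Δ g ϑ _ k (AuxPer.tail k a))
      (auxV_periodic Sb g ϑ b0 b1 b2 _ k (AuxPer.tail k b)) x
  have tr0 : ∀ k, Function.Periodic (auxF S11 S12 S13 ϑ c1 0 0 μ ε) (0, k) →
      Function.Periodic (auxF S21 S22 S23 ϑ c1 0 0 μ ε) (0, k) → ∀ x, w0 (x + k) = w0 x :=
    fun k a b x => sys0.translate hw0 k (auxN_periodic G Δ g ϑ _ k (AuxPer.tail k a))
      (auxV_periodic Sb g ϑ b0 b1 b2 _ k (AuxPer.tail k b)) x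
  refine ⟨sys, w, w0, hw, hw0.c1, tr _ gF.per.p2 gF'.per.p2, tr _ gF.per.p3 gF'.per.p3,
    tr _ gF.per.p4 gF'.per.p4, tr0 _ gF0.per.p3 gF0'.per.p3, fun a b c => ?_, fun x => ?_,
    fun x => ?_⟩
  · have := tr0 (a, 0, c) (fun p => by simp [auxF]) (fun p => by simp [auxF]) (0, b, 0)
    simpa using this
  · have := sys0.small_man hw0 (c1 * (MS / |g|)) (fun x => by
      have h1 : auxN G Δ g ϑ (auxF S11 S12 S13 ϑ c1 0 0 μ ε) (0, x) =
          auxF S11 S12 S13 ϑ c1 0 0 μ ε (0, x) / (-g) := by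
        simp [auxN, hGΔ]
      rw [h1, abs_div, abs_neg]
      refine (div_le_div_of_nonneg_right (gF0.bd _) hg0.le).trans (le_of_eq ?_)
      ring) x
    refine this.trans ?_
    rw [hC]
    nlinarith [mul_nonneg h1 hMg]
  · have := sys.compare hw hw0 ((c2 + c3) * MS / |g|) ((c2 + c3) * MS / |g|)
      (fun z x _ => by
        have := auxF_sub S11 S12 S13 MS hS12.2.2 hS13.2.2 ϑ c1 c2 c3 μ ε g h2 h3 (z, x)
        refine le_trans (le_of_eq ?_) this
        simp only [auxN]
        congr 1
        ring)
      (fun z x _ => by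
        have := auxF_sub S21 S22 S23 MS hS22.2.2 hS23.2.2 ϑ c1 c2 c3 μ ε g h2 h3 (z, x)
        refine le_trans (le_of_eq ?_) this
        simp only [auxV, Prod.mk_sub_mk, sub_self, Prod.norm_mk, norm_zero, max_self]
        rw [max_eq_left (norm_nonneg _), Real.norm_eq_abs]
        congr 1
        ring) x
    refine this.trans ?_
    have e : (c2 + c3) * MS / |g| = (c2 + c3) * (MS / |g|) := by ring
    rw [e, hC]
    nlinarith [mul_nonneg (add_nonneg h2 h3) hMg, add_nonneg h2 h3]

end SlowPhaseHelpers

/-- Lemma 6.1, abstract form: integral manifolds `ψ₂ = ϑ⁰ + v(φ₂, βt, αt, μ, ε)`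
near a nondegenerate zero `ϑ⁰` of `G − Δ` for the slow phase system, exponentially stable if
`G′(ϑ⁰) < 0` and exponentially unstable if `G′(ϑ⁰) > 0`. -/
theorem slow_phase_integral_manifolds
    (α₀ β₀ : ℝ) (hα₀ : 0 < α₀) (hβ₀ : 0 < β₀)
    (G : ℝ → ℝ) (hG : ContDiff ℝ 1 G) (hGper : Function.Periodic G (2 * Real.pi))
    (Δ ϑ0 : ℝ) (hϑ0 : G ϑ0 = Δ) (hϑ0' : deriv G ϑ0 ≠ 0)
    (S11 S21 : ℝ × ℝ × ℝ → ℝ) (S21bar : ℝ → ℝ)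
    (S12 S13 S22 S23 : ℝ × ℝ × ℝ × ℝ × ℝ × ℝ → ℝ)
    (MS : ℝ)
    (hS11 : ContDiff ℝ 1 S11 ∧ Per2of3 S11 ∧ BddWithDeriv S11 MS)
    (hS21 : ContDiff ℝ 1 S21 ∧ Per2of3 S21 ∧ BddWithDeriv S21 MS)
    (hS21bar : ContDiff ℝ 1 S21bar ∧ Function.Periodic S21bar (2 * Real.pi) ∧
      BddWithDeriv S21bar MS)
    (hS12 : ContDiff ℝ 1 S12 ∧ Per4of6 S12 ∧ BddWithDeriv S12 MS)
    (hS13 : ContDiff ℝ 1 S13 ∧ Per4of6 S13 ∧ BddWithDeriv S13 MS)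
    (hS22 : ContDiff ℝ 1 S22 ∧ Per4of6 S22 ∧ BddWithDeriv S22 MS)
    (hS23 : ContDiff ℝ 1 S23 ∧ Per4of6 S23 ∧ BddWithDeriv S23 MS) :
    ∃ μ₀ > (0:ℝ), ∃ c₀ > (0:ℝ), ∃ M₃ > (0:ℝ), ∃ δ₀ > (0:ℝ),
    ∃ L₂ ≥ (1:ℝ), ∃ κ₂ > (0:ℝ), ∃ L₃ ≥ (1:ℝ), ∃ κ₃ > (0:ℝ),
    ∀ α β μ ε : ℝ, α₀ ≤ α → 0 < β → 0 < μ → μ ≤ μ₀ → 0 < ε → ε ≤ c₀ * μ ^ ((1:ℝ)/3) →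
      ∃ (v₀ : ℝ × ℝ → ℝ) (v₁ v₂ : ℝ × ℝ × ℝ × ℝ × ℝ → ℝ),
        ContDiff ℝ 1 v₀ ∧ ContDiff ℝ 1 v₁ ∧ ContDiff ℝ 1 v₂
        ∧ (∀ a b : ℝ, v₀ (a + 2 * Real.pi, b) = v₀ (a, b))
        ∧ Per3of5 v₁ ∧ Per3of5 v₂
        ∧ (∀ p, |v₀ p| ≤ M₃) ∧ (∀ p, |v₁ p| ≤ M₃) ∧ (∀ p, |v₂ p| ≤ M₃)
        -- the graph `ψ₂ = ϑ0 + v(φ₂, βt, αt, μ, ε)` is an integral manifold: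
        ∧ (∀ φf : ℝ → ℝ,
            (∀ t : ℝ, HasDerivAt φf (RHSφ α₀ S21bar S21 S22 S23 α β μ ε
                (graphψ ϑ0 v₀ v₁ v₂ α β μ ε (φf t) t) (φf t) t) t) →
            ∀ t : ℝ, HasDerivAt (fun s => graphψ ϑ0 v₀ v₁ v₂ α β μ ε (φf s) s)
              (RHSψ G S11 S12 S13 Δ α β μ ε
                (graphψ ϑ0 v₀ v₁ v₂ α β μ ε (φf t) t) (φf t) t) t)
        -- exponential stability when `G′(ϑ0) < 0`:
        ∧ (deriv G ϑ0 < 0 →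
            ∀ (ψf φf : ℝ → ℝ) (t₀ : ℝ),
              (∀ t : ℝ, HasDerivAt ψf
                (RHSψ G S11 S12 S13 Δ α β μ ε (ψf t) (φf t) t) t) →
              (∀ t : ℝ, HasDerivAt φf
                (RHSφ α₀ S21bar S21 S22 S23 α β μ ε (ψf t) (φf t) t) t) →
              |ψf t₀ - ϑ0| ≤ δ₀ →
              ∃ φb : ℝ → ℝ,
                (∀ t : ℝ, HasDerivAt φb (RHSφ α₀ S21bar S21 S22 S23 α β μ ε
                    (graphψ ϑ0 v₀ v₁ v₂ α β μ ε (φb t) t) (φb t) t) t) ∧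
                ∀ t : ℝ, t₀ ≤ t →
                  |ψf t - graphψ ϑ0 v₀ v₁ v₂ α β μ ε (φb t) t| + |φf t - φb t|
                    ≤ L₂ * Real.exp (-μ^2 * κ₂ * (t - t₀)) *
                      (|ψf t₀ - graphψ ϑ0 v₀ v₁ v₂ α β μ ε (φb t₀) t₀| + |φf t₀ - φb t₀|))
        -- exponential instability when `G′(ϑ0) > 0`:
        ∧ (0 < deriv G ϑ0 →
            ∀ (ψf φf : ℝ → ℝ) (t₀ : ℝ),
              (∀ t : ℝ, HasDerivAt ψf
                (RHSψ G S11 S12 S13 Δ α β μ ε (ψf t) (φf t) t) t) →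
              (∀ t : ℝ, HasDerivAt φf
                (RHSφ α₀ S21bar S21 S22 S23 α β μ ε (ψf t) (φf t) t) t) →
              |ψf t₀ - ϑ0| ≤ δ₀ →
              ∃ φb : ℝ → ℝ,
                (∀ t : ℝ, HasDerivAt φb (RHSφ α₀ S21bar S21 S22 S23 α β μ ε
                    (graphψ ϑ0 v₀ v₁ v₂ α β μ ε (φb t) t) (φb t) t) t) ∧
                ∀ t : ℝ, t ≤ t₀ →
                  |ψf t - graphψ ϑ0 v₀ v₁ v₂ α β μ ε (φb t) t| + |φf t - φb t|
                    ≤ L₃ * Real.exp (μ^2 * κ₃ * (t - t₀)) *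
                      (|ψf t₀ - graphψ ϑ0 v₀ v₁ v₂ α β μ ε (φb t₀) t₀| + |φf t₀ - φb t₀|)) := by
  set g := deriv G ϑ0 with hgdef
  have hg0 : 0 < |g| := abs_pos.2 hϑ0'
  have hMS : 0 ≤ MS := (abs_nonneg _).trans (hS21bar.2.2 0).1
  have hMg : 0 ≤ MS / |g| := by positivity
  obtain ⟨C, hC⟩ : ∃ C, C = MS / |g| + 1 := ⟨_, rfl⟩
  have hC1 : 1 ≤ C := by linarith
  have hC0 : 0 < C := by linarith
  have hη0 : 0 < 1 / (128 * C) := by positivity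
  obtain ⟨ρ, hρ, hGρ⟩ : ∃ ρ > 0, ∀ z, |z| ≤ ρ → |1 - deriv G (ϑ0 + z) / g| ≤ 1 / (128 * C) := by
    have hcont : Continuous fun z : ℝ => |1 - deriv G (ϑ0 + z) / g| := by
      have := hG.continuous_deriv le_rfl
      fun_prop
    have h0 : |1 - deriv G (ϑ0 + 0) / g| < 1 / (128 * C) := by
      rw [add_zero, ← hgdef, div_self hϑ0', sub_self, abs_zero]; exact hη0
    have hev := hcont.continuousAt.eventually_lt continuousAt_const h0
    obtain ⟨r, hr, hball⟩ := Metric.eventually_nhds_iff.1 hev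
    refine ⟨r / 2, by positivity, fun z hz => (hball ?_).le⟩
    rw [Real.dist_eq, sub_zero]
    linarith
  obtain ⟨m, hm0, hm1, hmη, hmρ⟩ : ∃ m : ℝ, 0 < m ∧ m ≤ 1 ∧ 3 * m * C ≤ 1 / (128 * C) ∧
      3 * m * C ≤ ρ / 2 := by
    refine ⟨min 1 (min (1 / (128 * C)) (ρ / 2) / (3 * C)), by positivity, min_le_left _ _, ?_, ?_⟩
    · have h1 := min_le_right 1 (min (1 / (128 * C)) (ρ / 2) / (3 * C))
      rw [le_div_iff₀ (by positivity)] at h1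
      have h2 := min_le_left (1 / (128 * C)) (ρ / 2)
      linarith
    · have h1 := min_le_right 1 (min (1 / (128 * C)) (ρ / 2) / (3 * C))
      rw [le_div_iff₀ (by positivity)] at h1
      have h2 := min_le_right (1 / (128 * C)) (ρ / 2)
      linarith
  refine ⟨m, hm0, m, hm0, 6 * C, by positivity, ρ, hρ, 2 + 2 * C, by linarith,
    3 / 4 * |g|, by positivity, 2 + 2 * C, by linarith, 3 / 4 * |g|, by positivity, ?_⟩
  intro α β μ ε hα hβ hμ hμm hε hεm
  have hμ1 : μ ≤ 1 := hμm.trans hm1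
  have hr0 : 0 < μ ^ ((1:ℝ)/3) := Real.rpow_pos_of_pos hμ _
  have hr1 : μ ^ ((1:ℝ)/3) ≤ 1 := Real.rpow_le_one hμ.le hμ1 (by norm_num)
  have hr3 : (μ ^ ((1:ℝ)/3)) ^ 3 = μ := by
    rw [← Real.rpow_natCast, ← Real.rpow_mul hμ.le]
    norm_num
  have hεm' : ε ≤ m := hεm.trans (by nlinarith)
  have hε3 : ε ^ 3 ≤ m ^ 3 * μ := by
    have := pow_le_pow_left₀ hε.le hεm 3
    rwa [mul_pow, hr3] at this
  have hm3 : m ^ 3 ≤ m := by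
    have := pow_le_pow_of_le_one hm0.le hm1 (show 1 ≤ 3 by norm_num)
    simpa using this
  have hc1 : μ ^ 2 ≤ m := by nlinarith
  have hc2 : ε ^ 2 ≤ m := by nlinarith
  have hc3 : ε ^ 3 / μ ≤ m := by
    rw [div_le_iff₀ hμ]
    exact hε3.trans (mul_le_mul_of_nonneg_right hm3 hμ.le)
  have hp1 : 0 < μ ^ 2 := by positivity
  have hp2 : 0 < ε ^ 2 := by positivity
  have hp3 : 0 < ε ^ 3 / μ := by positivity
  have hsum : (μ ^ 2 + ε ^ 2 + ε ^ 3 / μ) * (MS / |g|) ≤ 3 * m * C := by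
    apply mul_le_mul _ _ hMg (by positivity)
    · linarith
    · linarith
  obtain ⟨σ, hσ⟩ : ∃ σ, σ = -g * μ ^ 2 := ⟨_, rfl⟩
  have hσ0 : σ ≠ 0 := by rw [hσ]; exact mul_ne_zero (neg_ne_zero.2 hϑ0') hp1.ne'
  obtain ⟨sys, w, w0, hw, hw0c, wp1, wp2, wp3, w0p, w0i, w0b, wb⟩ :=
    aux_pair G S21bar Δ g ϑ0 (α₀ / μ ^ 2) (β / σ) (α / σ) MS C ρ hG hGper hϑ0 hS21bar hϑ0' hC hρ
      hGρ S11 S21 S12 S13 S22 S23 hS11 hS21 hS12 hS13 hS22 hS23 (μ ^ 2) (ε ^ 2) (ε ^ 3 / μ) μ ε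
      hp1.le hp2.le hp3.le (hsum.trans hmη) (hsum.trans hmρ)
  have hψ : ∀ z φ t, RHSψ G S11 S12 S13 Δ α β μ ε (ϑ0 + z) φ t =
      σ * (-z + auxN G Δ g ϑ0 (auxF S11 S12 S13 ϑ0 (μ ^ 2) (ε ^ 2) (ε ^ 3 / μ) μ ε)
        (z, φ, β * t, α * t)) := by
    intro z φ t
    simp only [RHSψ, auxN, auxF, hσ]
    field_simp
    ring
  have hφ : ∀ z φ t, RHSφ α₀ S21bar S21 S22 S23 α β μ ε (ϑ0 + z) φ t =
      σ * (auxV S21bar g ϑ0 (α₀ / μ ^ 2) (β / σ) (α / σ)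
        (auxF S21 S22 S23 ϑ0 (μ ^ 2) (ε ^ 2) (ε ^ 3 / μ) μ ε) (z, φ, β * t, α * t)).1 := by
    intro z φ t
    simp only [RHSφ, auxV, auxF, hσ]
    field_simp
    ring
  have hV2 : ∀ p, (auxV S21bar g ϑ0 (α₀ / μ ^ 2) (β / σ) (α / σ)
        (auxF S21 S22 S23 ϑ0 (μ ^ 2) (ε ^ 2) (ε ^ 3 / μ) μ ε) p).2 = (β / σ, α / σ) :=
    fun p => rfl
  obtain ⟨v₀, hv₀⟩ : ∃ v₀ : ℝ × ℝ → ℝ, v₀ = fun p => w0 (0, p.1, 0) / μ ^ 2 := ⟨_, rfl⟩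
  obtain ⟨v₁, hv₁⟩ : ∃ v₁ : ℝ × ℝ × ℝ × ℝ × ℝ → ℝ,
      v₁ = fun p => (w (p.1, p.2.1, p.2.2.1) - w0 (0, p.2.1, 0)) / (ε ^ 2 + ε ^ 3 / μ) :=
    ⟨_, rfl⟩
  have hgr : ∀ φ t, graphψ ϑ0 v₀ v₁ v₁ α β μ ε φ t = ϑ0 + w (φ, β * t, α * t) := by
    intro φ t
    have hp4 : ε ^ 2 + ε ^ 3 / μ ≠ 0 := by positivity
    have e1 : ε ^ 2 * v₁ (φ, β * t, α * t, μ, ε) + ε ^ 3 / μ * v₁ (φ, β * t, α * t, μ, ε) =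
        w (φ, β * t, α * t) - w0 (0, β * t, 0) := by
      rw [← add_mul, hv₁]
      exact mul_div_cancel₀ _ hp4
    have e2 : μ ^ 2 * v₀ (β * t, μ) = w0 (0, β * t, 0) := by
      rw [hv₀]
      exact mul_div_cancel₀ _ hp1.ne'
    rw [graphψ, add_assoc (μ ^ 2 * v₀ (β * t, μ)), e1, e2]
    ring
  have hv₁c : ContDiff ℝ 1 v₁ := by
    have h1 := hw.c1
    rw [hv₁]
    have h2 : ContDiff ℝ 1 fun p : ℝ × ℝ × ℝ × ℝ × ℝ => w (p.1, p.2.1, p.2.2.1) :=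
      h1.comp (by fun_prop)
    have h3 : ContDiff ℝ 1 fun p : ℝ × ℝ × ℝ × ℝ × ℝ => w0 (0, p.2.1, 0) :=
      hw0c.comp (by fun_prop)
    exact (h2.sub h3).div_const _
  have hw0p : ∀ b, w0 (0, b + 2 * Real.pi, 0) = w0 (0, b, 0) := by
    intro b
    simpa using w0p (0, b, 0)
  have hv₁p : Per3of5 v₁ := by
    intro a b c d e
    have q1 := wp1 (a, b, c)
    have q2 := wp2 (a, b, c)
    have q3 := wp3 (a, b, c)
    simp only [Prod.mk_add_mk, add_zero] at q1 q2 q3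
    rw [hv₁]
    refine ⟨?_, ?_, ?_⟩
    · simp only [q1]
    · simp only [q2, hw0p]
    · simp only [q3]
  have hv₁b : ∀ p, |v₁ p| ≤ 6 * C := by
    intro p
    have hp4 : 0 < ε ^ 2 + ε ^ 3 / μ := by positivity
    rw [hv₁]
    simp only
    rw [abs_div, abs_of_pos hp4, div_le_iff₀ hp4, ← w0i p.1 p.2.1 p.2.2.1]
    linarith [wb (p.1, p.2.1, p.2.2.1)]
  refine ⟨v₀, v₁, v₁, ?_, hv₁c, hv₁c, ?_, hv₁p, hv₁p, ?_, hv₁b, hv₁b, ?_, ?_, ?_⟩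
  · rw [hv₀]
    have h3 : ContDiff ℝ 1 fun p : ℝ × ℝ => w0 (0, p.1, 0) := hw0c.comp (by fun_prop)
    exact h3.div_const _
  · intro a b
    rw [hv₀]
    simp only [hw0p]
  · intro p
    rw [hv₀]
    simp only
    rw [abs_div, abs_of_pos hp1, div_le_iff₀ hp1]
    linarith [w0b (0, p.1, 0)]
  · intro φf hf t
    simp only [hgr] at hf ⊢
    exact aux_manifold hw σ α β ϑ0 hσ0 _ _ hψ hφ hV2 φf hf t
  · intro hneg ψf φf t₀ h1 h2 h0
    obtain ⟨φb, hb1, hb2⟩ := aux_stability sys hw σ α β ϑ0 hσ0 _ _ hψ hφ hV2 ψf φf t₀ h1 h2 h0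
    refine ⟨φb, fun t => ?_, fun t ht => ?_⟩
    · rw [hgr]; exact hb1 t
    · rw [hgr, hgr]
      have hσp : 0 ≤ σ := by rw [hσ]; nlinarith
      have := hb2 t (mul_nonneg hσp (sub_nonneg.2 ht))
      have e : -(3 / 4 * (σ * (t - t₀))) = -μ ^ 2 * (3 / 4 * |g|) * (t - t₀) := by
        rw [hσ, abs_of_neg hneg]; ring
      rwa [e] at this
  · intro hpos ψf φf t₀ h1 h2 h0
    obtain ⟨φb, hb1, hb2⟩ := aux_stability sys hw σ α β ϑ0 hσ0 _ _ hψ hφ hV2 ψf φf t₀ h1 h2 h0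
    refine ⟨φb, fun t => ?_, fun t ht => ?_⟩
    · rw [hgr]; exact hb1 t
    · rw [hgr, hgr]
      have hσp : σ ≤ 0 := by rw [hσ]; nlinarith
      have := hb2 t (mul_nonneg_of_nonpos_of_nonpos hσp (sub_nonpos.2 ht))
      have e : -(3 / 4 * (σ * (t - t₀))) = μ ^ 2 * (3 / 4 * |g|) * (t - t₀) := by
        rw [hσ, abs_of_pos hpos]; ring
      rwa [e] at this
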